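/- If the Riemann hypothesis holds, then for every positive integer n one has (∑_{k ≤ δ(n)} 1/k − n²/2)² < 25·n³ + 10·n^{3/2} + 1. -/

import Mathlib

open scoped Real

/-- The Riemann hypothesis: every nontrivial zero of ζ (a zero with real part strictly
between 0 and 1) has real part 1/2. -/
def RH : Prop := ∀ s : ℂ, riemannZeta s = 0 → 0 < s.re → s.re < 1 → s.re = 1 / 2

/-- η(j) = p if j = p^k is a power of a prime p (k ≥ 1), and η(j) = 1 otherwise. -/
noncomputable def eta (j : ℕ) : ℕ := if IsPrimePow j then j.minFac else 1

/-- δ(n) = ∏_{m < n} ∏_{j ≤ m} η(j). -/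
noncomputable def delta (n : ℕ) : ℕ :=
  ∏ m ∈ Finset.range n, ∏ j ∈ Finset.Icc 1 m, eta j

open Complex in
lemma norm_betaIntegral_le (z : ℂ) (hz : 0 < z.re) (h : ℝ) (hh : 0 < h) :
    ∃ b : ℝ, betaIntegral (z.re : ℂ) h = b ∧ ‖betaIntegral z h‖ ≤ b := by
  refine ⟨∫ x in (0:ℝ)..1, x ^ (z.re - 1) * (1 - x) ^ (h - 1), ?_, ?_⟩
  · rw [betaIntegral, ← intervalIntegral.integral_ofReal]
    apply intervalIntegral.integral_congr
    intro x hx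
    rw [Set.uIcc_of_le zero_le_one] at hx
    have h1 : (0:ℝ) ≤ 1 - x := by linarith [hx.2]
    simp only
    rw [ofReal_mul, ofReal_cpow hx.1, ofReal_cpow h1]
    push_cast
    rfl
  · rw [betaIntegral]
    refine (intervalIntegral.norm_integral_le_integral_norm zero_le_one).trans (le_of_eq ?_)
    rw [intervalIntegral.integral_of_le zero_le_one, intervalIntegral.integral_of_le zero_le_one,
      MeasureTheory.integral_Ioc_eq_integral_Ioo, MeasureTheory.integral_Ioc_eq_integral_Ioo]
    apply MeasureTheory.setIntegral_congr_fun measurableSet_Ioo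
    intro x hx
    have h1 : (0:ℝ) < 1 - x := by linarith [hx.2]
    simp only [norm_mul]
    rw [norm_cpow_eq_rpow_re_of_pos hx.1, show (1 - (x:ℂ)) = ((1 - x : ℝ) : ℂ) by push_cast; rfl,
      norm_cpow_eq_rpow_re_of_pos h1]
    simp

open Complex in
lemma gamma_shift (z : ℂ) (hz : 0 < z.re) (h : ℝ) (hh : 0 < h) :
    ‖Gamma z‖ * Real.Gamma (z.re + h) ≤ Real.Gamma z.re * ‖Gamma (z + h)‖ := by
  obtain ⟨b, hb, hle⟩ := norm_betaIntegral_le z hz h hh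
  have e1 := Gamma_mul_Gamma_eq_betaIntegral (s := z) (t := h) hz (by simpa using hh)
  have e2 := Gamma_mul_Gamma_eq_betaIntegral (s := (z.re : ℂ)) (t := h) (by simpa using hz)
    (by simpa using hh)
  rw [hb, Gamma_ofReal, Gamma_ofReal, ← ofReal_add, Gamma_ofReal] at e2
  norm_cast at e2
  have e3 := congrArg norm e1
  rw [norm_mul, norm_mul, Gamma_ofReal, norm_real, Real.norm_eq_abs,
    abs_of_pos (Real.Gamma_pos_of_pos hh)] at e3
  have p1 := Real.Gamma_pos_of_pos hh
  have p2 := Real.Gamma_pos_of_pos (add_pos hz hh)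
  have : (‖Gamma z‖ * Real.Gamma (z.re + h)) * Real.Gamma h ≤
      (Real.Gamma z.re * ‖Gamma (z + h)‖) * Real.Gamma h := by
    calc _ = (‖Gamma z‖ * Real.Gamma h) * Real.Gamma (z.re + h) := by ring
      _ = ‖Gamma (z + h)‖ * ‖betaIntegral z h‖ * Real.Gamma (z.re + h) := by rw [e3]
      _ ≤ ‖Gamma (z + h)‖ * b * Real.Gamma (z.re + h) := by gcongr
      _ = ‖Gamma (z + h)‖ * (Real.Gamma (z.re + h) * b) := by ring
      _ = _ := by rw [← e2]; ring
  exact le_of_mul_le_mul_right this p1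

lemma deriv_nonneg_of_right {φ : ℝ → ℝ} {d : ℝ} (hd : HasDerivAt φ d 0) (h0 : φ 0 = 0)
    {ε : ℝ} (hε : 0 < ε) (h : ∀ x, 0 < x → x < ε → 0 ≤ φ x) : 0 ≤ d := by
  have := hd.hasDerivWithinAt (s := Set.Ioi 0)
  rw [hasDerivWithinAt_iff_tendsto_slope' (by simp)] at this
  refine ge_of_tendsto this ?_
  filter_upwards [Ioo_mem_nhdsGT hε] with x hx
  rw [slope_def_field, h0]
  have := h x hx.1 hx.2
  have := hx.1
  simp only [sub_zero]
  positivity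

open Complex in
lemma hasDerivAt_normSq_shift {f : ℂ → ℂ} {f' z : ℂ} (c : ℝ) (hf : HasDerivAt f f' z) :
    HasDerivAt (fun h : ℝ => ‖f (z + (c * h : ℝ))‖ ^ 2) (2 * c * (f' * starRingEnd ℂ (f z)).re) 0 := by
  have h1 : HasDerivAt (fun h : ℝ => z + ((c * h : ℝ) : ℂ)) (c : ℂ) 0 := by
    have : HasDerivAt (fun h : ℝ => ((c * h : ℝ) : ℂ)) ((c * 1 : ℝ) : ℂ) 0 :=
      ((hasDerivAt_id (0:ℝ)).const_mul c).ofReal_comp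
    simpa using this.const_add z
  have hf' : HasDerivAt f f' (z + ((c * (0:ℝ) : ℝ) : ℂ)) := by simpa using hf
  have h2 := (hf'.comp (0:ℝ) h1).norm_sq
  refine h2.congr_deriv ?_
  rw [Complex.inner]
  simp only [Function.comp_apply, mul_zero, ofReal_zero, add_zero]
  rw [mul_re, mul_re, mul_re, mul_im]
  simp
  ring

open Complex in
lemma re_logDeriv_eq (f : ℂ → ℂ) (z : ℂ) :
    (logDeriv f z).re = (deriv f z * starRingEnd ℂ (f z)).re / ‖f z‖ ^ 2 := by
  rw [logDeriv_apply, div_eq_mul_inv, inv_def, ← mul_assoc, normSq_eq_norm_sq,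
    re_mul_ofReal]
  rfl

open Complex in
lemma re_digamma_ge (z : ℂ) (hz : 0 < z.re) :
    deriv Real.Gamma z.re / Real.Gamma z.re ≤ (digamma z).re := by
  have hne : ∀ m : ℕ, z ≠ -m := by
    intro m hm
    rw [hm] at hz
    simp at hz
    linarith [(Nat.cast_nonneg m : (0:ℝ) ≤ m)]
  have hG := hasDerivAt_normSq_shift 1 (differentiableAt_Gamma z hne).hasDerivAt
  have hR0 : DifferentiableAt ℝ Real.Gamma z.re := by
    apply Real.differentiableAt_Gamma
    intro m hm
    linarith [(Nat.cast_nonneg m : (0:ℝ) ≤ m)]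
  have hR : HasDerivAt (fun h : ℝ => Real.Gamma (z.re + h) ^ 2)
      (2 * Real.Gamma z.re * deriv Real.Gamma z.re) 0 := by
    have h1 : HasDerivAt Real.Gamma (deriv Real.Gamma z.re) (z.re + 0) := by
      simpa using hR0.hasDerivAt
    have := (h1.comp_const_add z.re 0).fun_pow 2
    simpa using this
  have p2 := Real.Gamma_pos_of_pos hz
  have hφ := (hG.const_mul (Real.Gamma z.re ^ 2)).sub (hR.const_mul (‖Gamma z‖ ^ 2))
  have hnn := deriv_nonneg_of_right hφ (by simp; ring) one_pos (by
    intro h hh _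
    have := gamma_shift z hz h hh
    have p1 := Real.Gamma_pos_of_pos (add_pos hz hh)
    have h2 := pow_le_pow_left₀ (by positivity) this 2
    simp only [one_mul, Pi.sub_apply]
    rw [mul_pow, mul_pow] at h2
    linarith)
  have hGz : 0 < ‖Gamma z‖ := norm_pos_iff.mpr (Gamma_ne_zero hne)
  rw [digamma_def, re_logDeriv_eq, div_le_div_iff₀ p2 (by positivity)]
  have : 0 ≤ 2 * Real.Gamma z.re * ((deriv Gamma z * starRingEnd ℂ (Gamma z)).re * Real.Gamma z.re - deriv Real.Gamma z.re * ‖Gamma z‖ ^ 2) := by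
    calc _ ≤ _ := hnn
      _ = _ := by ring
  have := nonneg_of_mul_nonneg_right this (by positivity : 0 < 2 * Real.Gamma z.re)
  linarith

lemma digamma_real_ge (x : ℝ) (hx : 1 ≤ x) :
    -Real.eulerMascheroniConstant ≤ deriv Real.Gamma x / Real.Gamma x := by
  have hd : ∀ y : ℝ, 0 < y → HasDerivAt (Real.log ∘ Real.Gamma) (deriv Real.Gamma y / Real.Gamma y) y := by
    intro y hy
    have : DifferentiableAt ℝ Real.Gamma y := by
      apply Real.differentiableAt_Gamma
      intro m hm
      linarith [(Nat.cast_nonneg m : (0:ℝ) ≤ m)]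
    exact this.hasDerivAt.log (Real.Gamma_pos_of_pos hy).ne'
  have hm := Real.convexOn_log_Gamma.monotoneOn_deriv (fun y hy => (hd y hy).differentiableAt.differentiableWithinAt.differentiableAt (Ioi_mem_nhds hy))
  have := hm (Set.mem_Ioi.mpr one_pos) (Set.mem_Ioi.mpr (one_pos.trans_le hx)) hx
  rw [(hd 1 one_pos).deriv, (hd x (one_pos.trans_le hx)).deriv, Real.Gamma_one,
    div_one] at this
  have e := Real.eulerMascheroniConstant_eq_neg_deriv
  linarith

open Complex in
lemma re_digamma_ge' (z : ℂ) (hz : 1 ≤ z.re) :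
    -Real.eulerMascheroniConstant ≤ (digamma z).re :=
  (digamma_real_ge _ hz).trans (re_digamma_ge z (by linarith))


lemma strip_bound_mellin (P : WeakFEPair ℂ) (a b : ℝ) :
    ∃ C : ℝ, 0 ≤ C ∧ ∀ s : ℂ, a ≤ s.re → s.re ≤ b → ‖P.Λ₀ s‖ ≤ C := by
  have hc : ∀ r : ℝ, MeasureTheory.IntegrableOn (fun t : ℝ => t ^ (r - 1) * ‖P.f_modif t‖) (Set.Ioi 0) := by
    intro r
    have h : MellinConvergent P.f_modif (r : ℂ) :=
      P.isStrongFEPair_toStrongFEPair.hasMellin r |>.1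
    refine h.norm.congr ?_
    filter_upwards [MeasureTheory.ae_restrict_mem measurableSet_Ioi] with t ht
    rw [norm_smul, Complex.norm_cpow_eq_rpow_re_of_pos ht]
    simp
  refine ⟨∫ t in Set.Ioi (0:ℝ), (t ^ (a - 1) * ‖P.f_modif t‖ + t ^ (b - 1) * ‖P.f_modif t‖), ?_, ?_⟩
  · apply MeasureTheory.setIntegral_nonneg measurableSet_Ioi
    intro t ht
    have : (0:ℝ) < t := ht
    positivity
  · intro s h1 h2
    unfold WeakFEPair.Λ₀ mellin
    refine (MeasureTheory.norm_integral_le_integral_norm _).trans ?_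
    apply MeasureTheory.setIntegral_mono_on
    · exact (P.isStrongFEPair_toStrongFEPair.hasMellin s).1.norm
    · exact (hc a).add (hc b)
    · exact measurableSet_Ioi
    · intro t ht
      have ht0 : (0:ℝ) < t := ht
      rw [norm_smul, Complex.norm_cpow_eq_rpow_re_of_pos ht, ← add_mul]
      gcongr
      rw [Complex.sub_re, Complex.one_re]
      rcases le_total t 1 with h | h
      · have := Real.rpow_le_rpow_of_exponent_ge ht0 h (by linarith : a - 1 ≤ s.re - 1)
        have : 0 ≤ t ^ (b-1) := by positivity
        linarith
      · have := Real.rpow_le_rpow_of_exponent_le h (by linarith : s.re - 1 ≤ b - 1)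
        have : 0 ≤ t ^ (a-1) := by positivity
        linarith

noncomputable def Xf (s : ℂ) : ℂ := s * (s - 1) * completedRiemannZeta₀ s + 1

lemma Xf_differentiable : Differentiable ℂ Xf := by
  unfold Xf
  have := differentiable_completedZeta₀
  fun_prop

lemma Xf_one_sub (s : ℂ) : Xf (1 - s) = Xf s := by
  unfold Xf
  rw [completedRiemannZeta₀_one_sub]
  ring

lemma Xf_one : Xf 1 = 1 := by simp [Xf]

lemma Xf_strip (a b : ℝ) : ∃ C : ℝ, 0 < C ∧ ∀ s : ℂ, a ≤ s.re → s.re ≤ b →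
    ‖Xf s‖ ≤ C * (1 + ‖s‖) ^ 2 := by
  obtain ⟨C, hC0, hC⟩ := strip_bound_mellin (HurwitzZeta.hurwitzEvenFEPair 0) (a / 2) (b / 2)
  refine ⟨C + 1, by linarith, ?_⟩
  intro s h1 h2
  have h3 : ‖completedRiemannZeta₀ s‖ ≤ C := by
    rw [← HurwitzZeta.completedHurwitzZetaEven₀_zero, HurwitzZeta.completedHurwitzZetaEven₀, norm_div]
    have := hC (s / 2) (by simp; linarith) (by simp; linarith)
    simp only [Complex.norm_ofNat]
    linarith
  unfold Xf
  have h4 : ‖s - 1‖ ≤ 1 + ‖s‖ := by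
    refine (norm_sub_le _ _).trans ?_
    simp; linarith
  calc ‖s * (s - 1) * completedRiemannZeta₀ s + 1‖ ≤ ‖s * (s - 1) * completedRiemannZeta₀ s‖ + ‖(1:ℂ)‖ := norm_add_le _ _
    _ = ‖s‖ * ‖s - 1‖ * ‖completedRiemannZeta₀ s‖ + 1 := by rw [norm_mul, norm_mul, norm_one]
    _ ≤ (1 + ‖s‖) * (1 + ‖s‖) * C + (1 + ‖s‖) ^ 2 := by
        have : ‖s‖ ≤ 1 + ‖s‖ := by linarith
        have : 0 ≤ ‖s‖ := norm_nonneg s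
        gcongr
        nlinarith
    _ = _ := by ring

lemma Xf_eq (s : ℂ) (hs : 0 < s.re) (hs1 : s ≠ 1) :
    Xf s = s * (s - 1) * Complex.Gammaℝ s * riemannZeta s := by
  have h0 : s ≠ 0 := by rintro rfl; simp at hs
  rw [riemannZeta_def_of_ne_zero h0, completedRiemannZeta_eq, Xf]
  have := Complex.Gammaℝ_ne_zero_of_re_pos hs
  have h1 : s - 1 ≠ 0 := sub_ne_zero.mpr hs1
  have h2 : 1 - s ≠ 0 := sub_ne_zero.mpr hs1.symm
  field_simp
  ring

open Complex in
lemma Gammaℝ_conj' (s : ℂ) : Gammaℝ (starRingEnd ℂ s) = starRingEnd ℂ (Gammaℝ s) := by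
  rw [Gammaℝ_def, Gammaℝ_def, map_mul, ← Gamma_conj, map_div₀, Complex.conj_ofNat]
  congr 1
  rw [show (-(starRingEnd ℂ) s / 2) = starRingEnd ℂ (-s/2) by rw [map_div₀, map_neg, Complex.conj_ofNat], cpow_conj, conj_ofReal]
  rw [arg_ofReal_of_nonneg Real.pi_pos.le]
  exact Real.pi_pos.ne

lemma Xf_conj (s : ℂ) : Xf (starRingEnd ℂ s) = starRingEnd ℂ (Xf s) := by
  have key : ∀ s : ℂ, 0 < s.re → Xf (starRingEnd ℂ s) = starRingEnd ℂ (Xf s) := by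
    intro s hs
    by_cases h1 : s = 1
    · simp [h1, Xf_one]
    · rw [Xf_eq s hs h1, Xf_eq _ (by simpa using hs) (by
        intro h; apply h1; rw [← Complex.conj_conj s, h]; simp), Gammaℝ_conj', riemannZeta_conj]
      simp
  rcases lt_or_ge 0 s.re with h | h
  · exact key s h
  · have := key (1 - s) (by simp; linarith)
    rw [map_sub, map_one, Xf_one_sub, Xf_one_sub] at this
    exact this

lemma Xf_ne_zero (hRH : RH) (s : ℂ) (hs : 1 / 2 < s.re) : Xf s ≠ 0 := by
  by_cases h1 : s = 1
  · simp [h1, Xf_one]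
  have h0 : s ≠ 0 := by rintro rfl; simp at hs; linarith
  rw [Xf_eq s (by linarith) h1]
  have hz : riemannZeta s ≠ 0 := by
    intro hz
    rcases lt_or_ge s.re 1 with h | h
    · have := hRH s hz (by linarith) h
      linarith
    · exact riemannZeta_ne_zero_of_one_le_re h hz
  have := Complex.Gammaℝ_ne_zero_of_re_pos (by linarith : 0 < s.re)
  have h1 : s - 1 ≠ 0 := sub_ne_zero.mpr h1
  positivity


open Complex in
lemma zeta_sub_one_le (s : ℂ) (hs : 2 ≤ s.re) : ‖riemannZeta s - 1‖ ≤ 13 / 20 := by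
  have h1 : 1 < s.re := by linarith
  have hz := hasSum_zeta_two
  have hz2 : HasSum (fun n : ℕ => 1 / ((n : ℝ) + 1 + 1) ^ 2) (π ^ 2 / 6 - 1) := by
    have h := (hasSum_nat_add_iff' (f := fun n : ℕ => 1 / (n : ℝ) ^ 2) 2).mpr hz
    simp only [Finset.sum_range_succ, Finset.sum_range_zero] at h
    have e1 : (fun n : ℕ => 1 / ((n : ℝ) + 1 + 1) ^ 2) = fun n : ℕ => 1 / ((n + 2 : ℕ) : ℝ) ^ 2 := by
      funext n
      push_cast
      ring
    rw [e1]
    have e2 : π ^ 2 / 6 - 1 = (π ^ 2 / 6 - (0 + 1 / ((0:ℕ):ℝ) ^ 2 + 1 / ((1:ℕ):ℝ) ^ 2)) := by norm_num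
    rw [e2]
    exact h
  have hsum : Summable (fun n : ℕ => 1 / ((n : ℂ) + 1) ^ s) := by
    have := (summable_nat_add_iff 1).mpr (Complex.summable_one_div_nat_cpow.mpr h1)
    simpa using this
  have e := zeta_eq_tsum_one_div_nat_add_one_cpow h1
  rw [hsum.tsum_eq_zero_add] at e
  simp only [CharP.cast_eq_zero, zero_add, one_cpow, div_one] at e
  rw [e, add_sub_cancel_left]
  have hle : ∀ n : ℕ, ‖1 / (((n + 1 : ℕ) : ℂ) + 1) ^ s‖ ≤ 1 / ((n : ℝ) + 1 + 1) ^ 2 := by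
    intro n
    rw [norm_div, norm_one, show (((n + 1 : ℕ) : ℂ) + 1) = ((n + 2 : ℕ) : ℂ) by push_cast; ring,
      norm_natCast_cpow_of_pos (by positivity)]
    have : ((n : ℝ) + 1 + 1) ^ 2 ≤ ((n + 2 : ℕ) : ℝ) ^ s.re := by
      rw [show ((n : ℝ) + 1 + 1) = ((n + 2 : ℕ) : ℝ) by push_cast; ring, ← Real.rpow_natCast]
      apply Real.rpow_le_rpow_of_exponent_le
      · push_cast; linarith [(Nat.cast_nonneg n : (0:ℝ) ≤ n)]
      · exact_mod_cast hs
    gcongr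
  refine (tsum_of_norm_bounded hz2 hle).trans ?_
  have := Real.pi_lt_d4
  have := Real.pi_pos
  nlinarith

lemma zeta_bounds (s : ℂ) (hs : 2 ≤ s.re) : 7 / 20 ≤ ‖riemannZeta s‖ ∧ ‖riemannZeta s‖ ≤ 33 / 20 := by
  have h := zeta_sub_one_le s hs
  have h1 := norm_sub_norm_le (1:ℂ) (riemannZeta s)
  have h2 := norm_sub_norm_le (riemannZeta s) (1:ℂ)
  rw [norm_sub_rev] at h1
  rw [norm_one] at h1 h2
  constructor <;> linarith

open Complex in
lemma norm_sin_le (w : ℂ) : ‖Complex.sin w‖ ≤ Real.exp |w.im| := by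
  rw [Complex.sin, norm_div, norm_mul, norm_I, mul_one, Complex.norm_ofNat]
  have h := norm_sub_le (cexp (-w * I)) (cexp (w * I))
  rw [norm_exp, norm_exp] at h
  have h1 : Real.exp (-w * I).re ≤ Real.exp |w.im| := Real.exp_le_exp.mpr (by simpa using le_abs_self _)
  have h2 : Real.exp (w * I).re ≤ Real.exp |w.im| := Real.exp_le_exp.mpr (by simpa using neg_le_abs _)
  linarith

open Complex in
lemma gamma_half_lower (z : ℂ) (hz : z.re = 1 / 2) :
    Real.exp (-π * |z.im|) ≤ ‖Gamma z‖ ^ 2 := by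
  have h := Gamma_mul_Gamma_one_sub z
  have hc : 1 - z = starRingEnd ℂ z := by
    apply Complex.ext <;> simp [hz]; norm_num
  rw [hc, Gamma_conj] at h
  have h2 := congrArg norm h
  rw [norm_mul, norm_conj, norm_div, norm_real, Real.norm_eq_abs, abs_of_pos Real.pi_pos] at h2
  rw [sq, h2]
  have h3 := norm_sin_le (π * z)
  rw [im_ofReal_mul, abs_mul, abs_of_pos Real.pi_pos] at h3
  have h0 : Complex.sin (π * z) ≠ 0 := by
    intro h0
    rw [h0] at h
    simp only [div_zero, mul_eq_zero, map_eq_zero, or_self] at h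
    exact Gamma_ne_zero_of_re_pos (by rw [hz]; norm_num) h
  have h1 : 0 < ‖Complex.sin (π * z)‖ := norm_pos_iff.mpr h0
  rw [neg_mul, Real.exp_neg, le_div_iff₀ h1]
  calc _ ≤ (Real.exp (π * |z.im|))⁻¹ * Real.exp (π * |z.im|) := by gcongr
    _ = 1 := inv_mul_cancel₀ (Real.exp_pos _).ne'
    _ ≤ π := by linarith [Real.pi_gt_three]

lemma real_gamma_shift (x a : ℝ) (hx : 1 < x) (ha : 0 < a) (ha1 : a < 1) :
    Real.Gamma (x - a) * (x - 1) ^ a ≤ Real.Gamma x := by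
  have h := Real.Gamma_mul_add_mul_le_rpow_Gamma_mul_rpow_Gamma (s := x) (t := x - 1) (a := 1 - a) (b := a)
    (by linarith) (by linarith) (by linarith) ha (by ring)
  rw [show (1 - a) * x + a * (x - 1) = x - a by ring] at h
  have e : Real.Gamma x = (x - 1) * Real.Gamma (x - 1) := by
    have := Real.Gamma_add_one (s := x - 1) (by linarith)
    simpa using this
  have p : 0 < Real.Gamma (x - 1) := Real.Gamma_pos_of_pos (by linarith)
  have p1 : 0 < Real.Gamma x := Real.Gamma_pos_of_pos (by linarith)
  have hx1 : 0 < x - 1 := by linarith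
  calc Real.Gamma (x - a) * (x - 1) ^ a ≤ Real.Gamma x ^ (1 - a) * Real.Gamma (x - 1) ^ a * (x - 1) ^ a := by gcongr
    _ = Real.Gamma x ^ (1 - a) * ((x - 1) * Real.Gamma (x - 1)) ^ a := by
        rw [Real.mul_rpow hx1.le p.le]; ring
    _ = Real.Gamma x := by
        rw [← e, ← Real.rpow_add p1]; simp

open Complex in
lemma norm_Gammaℝ (s : ℂ) : ‖Gammaℝ s‖ = π ^ (-s.re / 2) * ‖Gamma (s / 2)‖ := by
  rw [Gammaℝ_def, norm_mul, norm_cpow_eq_rpow_re_of_pos Real.pi_pos]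
  simp

open Complex in
lemma norm_le_of_re_shift (s : ℂ) (c : ℝ) (h : 0 ≤ c) (hc : c ≤ s.re) : ‖s - c‖ ≤ ‖s‖ := by
  rw [norm_def, norm_def]
  apply Real.sqrt_le_sqrt
  rw [normSq_apply, normSq_apply]
  simp
  nlinarith

open Complex in
lemma Xf_line_le (a : ℝ) (ha : 0 < a) (ha1 : a < 1) (s : ℂ) (hs : 6 ≤ s.re)
    (hb : 5 * π ^ a ≤ (s.re / 2 - 1) ^ a) : ‖Xf (s - (2 * a : ℝ))‖ ≤ ‖Xf s‖ := by
  have hs1 : s ≠ 1 := by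
    intro h
    rw [h, one_re] at hs
    linarith
  have hs2 : (s - (2 * a : ℝ)) ≠ 1 := by
    intro h; have := congrArg re h; simp at this; linarith
  rw [Xf_eq s (by linarith) hs1, Xf_eq _ (by simp; linarith) hs2]
  rw [norm_mul, norm_mul, norm_mul, norm_mul, norm_mul, norm_mul, norm_Gammaℝ, norm_Gammaℝ]
  have z1 := (zeta_bounds s (by linarith)).1
  have z2 := (zeta_bounds (s - (2 * a : ℝ)) (by simp; linarith)).2
  have n1 := norm_le_of_re_shift s (2 * a) (by linarith) (by linarith)
  have n2 := norm_le_of_re_shift (s - 1) (2 * a) (by linarith) (by simp; linarith)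
  rw [show s - 1 - ((2 * a : ℝ) : ℂ) = s - (2 * a : ℝ) - 1 by ring] at n2
  set z : ℂ := (s - (2 * a : ℝ)) / 2 with hz
  have hzre : z.re = s.re / 2 - a := by simp [hz]; ring
  have g := gamma_shift z (by rw [hzre]; linarith) a ha
  have hza : z + a = s / 2 := by rw [hz]; push_cast; ring
  rw [hza, hzre, sub_add_cancel] at g
  have rg := real_gamma_shift (s.re / 2) a (by linarith) ha ha1
  have p1 : 0 < Real.Gamma (s.re / 2) := Real.Gamma_pos_of_pos (by linarith)
  have p2 : 0 < Real.Gamma (s.re / 2 - a) := Real.Gamma_pos_of_pos (by linarith)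
  have G : 5 * π ^ a * ‖Gamma z‖ ≤ ‖Gamma (s / 2)‖ := by
    have : (5 * π ^ a * ‖Gamma z‖) * Real.Gamma (s.re / 2 - a) ≤ ‖Gamma (s / 2)‖ * Real.Gamma (s.re / 2 - a) := by
      calc (5 * π ^ a * ‖Gamma z‖) * Real.Gamma (s.re / 2 - a)
          ≤ ((s.re / 2 - 1) ^ a * ‖Gamma z‖) * Real.Gamma (s.re / 2 - a) := by gcongr
        _ = ‖Gamma z‖ * (Real.Gamma (s.re / 2 - a) * (s.re / 2 - 1) ^ a) := by ring
        _ ≤ ‖Gamma z‖ * Real.Gamma (s.re / 2) := by gcongr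
        _ ≤ _ := by linarith
    exact le_of_mul_le_mul_right this p2
  have hpi : π ^ (-(s - (2 * a : ℝ)).re / 2) = π ^ (-s.re / 2) * π ^ a := by
    rw [← Real.rpow_add Real.pi_pos]; congr 1; simp; ring
  rw [hpi]
  calc ‖s - (2 * a : ℝ)‖ * ‖s - (2 * a : ℝ) - 1‖ * (π ^ (-s.re / 2) * π ^ a * ‖Gamma z‖) * ‖riemannZeta (s - (2 * a : ℝ))‖
      ≤ ‖s‖ * ‖s - 1‖ * (π ^ (-s.re / 2) * π ^ a * ‖Gamma z‖) * (33 / 20) := by gcongr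
    _ ≤ ‖s‖ * ‖s - 1‖ * (π ^ (-s.re / 2) * (5 * π ^ a * ‖Gamma z‖)) * (7 / 20) := by
        have : 0 ≤ ‖s‖ * ‖s - 1‖ * (π ^ (-s.re / 2) * π ^ a * ‖Gamma z‖) := by positivity
        nlinarith
    _ ≤ _ := by gcongr

open Complex in
lemma Xf_line_lower (m : ℕ) (hm : 2 ≤ m) : ∃ C : ℝ, 0 < C ∧ ∀ s : ℂ, s.re = 2 * m + 1 →
    Real.exp (-(C * (1 + |s.im|))) ≤ ‖Xf s‖ := by
  have hm' : (2:ℝ) ≤ m := by exact_mod_cast hm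
  set K : ℝ := π ^ (-(2 * (m:ℝ) + 1) / 2) * (Real.Gamma (1/2 + m) / Real.Gamma (1/2)) * (7 / 20) with hK
  have g1 : 0 < Real.Gamma (1/2 + m) := Real.Gamma_pos_of_pos (by positivity)
  have g2 : 0 < Real.Gamma (1/2) := Real.Gamma_pos_of_pos (by positivity)
  have hKpos : 0 < K := by positivity
  refine ⟨|Real.log K| + 1, by positivity, ?_⟩
  intro s hs
  have hs1 : s ≠ 1 := by rintro rfl; simp at hs; linarith
  rw [Xf_eq s (by linarith) hs1, norm_mul, norm_mul, norm_mul, norm_Gammaℝ]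
  have z1 := (zeta_bounds s (by linarith)).1
  have n1 : 1 ≤ ‖s‖ := le_trans (by linarith) (re_le_norm s)
  have n2 : 1 ≤ ‖s - 1‖ := le_trans (by simp; linarith) (re_le_norm (s - 1))
  set z : ℂ := s / 2 - m with hz
  have hzre : z.re = 1 / 2 := by simp [hz, hs]; ring
  have hzim : z.im = s.im / 2 := by simp [hz]
  have gs := gamma_shift z (by rw [hzre]; norm_num) m (by linarith)
  have hzm : z + ((m : ℝ) : ℂ) = s / 2 := by simp [hz]
  rw [hzm, hzre] at gs
  have gl := gamma_half_lower z hzre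
  rw [hzim, abs_div, abs_two] at gl
  have gl2 : Real.exp (-|s.im|) ≤ ‖Gamma z‖ := by
    apply le_of_sq_le_sq _ (norm_nonneg _)
    refine le_trans ?_ gl
    rw [← Real.exp_nat_mul]
    apply Real.exp_le_exp.mpr
    have := Real.pi_lt_four
    have := abs_nonneg s.im
    push_cast
    nlinarith
  have gl3 : Real.exp (-|s.im|) * (Real.Gamma (1/2 + m) / Real.Gamma (1/2)) ≤ ‖Gamma (s / 2)‖ := by
    rw [← mul_div_assoc, div_le_iff₀ g2]
    calc _ ≤ ‖Gamma z‖ * Real.Gamma (1/2 + m) := by gcongr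
      _ ≤ _ := by linarith
  rw [hs]
  calc Real.exp (-((|Real.log K| + 1) * (1 + |s.im|))) ≤ Real.exp (Real.log K + -|s.im|) := by
        apply Real.exp_le_exp.mpr
        have := neg_abs_le (Real.log K)
        have := abs_nonneg s.im
        have := abs_nonneg (Real.log K)
        nlinarith
    _ = 1 * 1 * (π ^ (-(2 * (m:ℝ) + 1) / 2) * (Real.exp (-|s.im|) * (Real.Gamma (1/2 + m) / Real.Gamma (1/2)))) * (7 / 20) := by
        rw [Real.exp_add, Real.exp_log hKpos, hK]; ring
    _ ≤ _ := by gcongr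


open Complex Metric in
lemma exists_log_ball (f : ℂ → ℂ) (hf : Differentiable ℂ f) (R : ℝ) (hR : 0 < R)
    (hne : ∀ z ∈ ball (0:ℂ) R, f z ≠ 0) :
    ∃ g : ℂ → ℂ, DifferentiableOn ℂ g (ball 0 R) ∧ g 0 = 0 ∧
      ∀ z ∈ ball (0:ℂ) R, f z = f 0 * cexp (g z) := by
  have hd : DifferentiableOn ℂ (fun z => deriv f z / f z) (ball 0 R) := by
    apply DifferentiableOn.div _ hf.differentiableOn hne
    exact (hf.differentiableOn.deriv isOpen_univ).mono (Set.subset_univ _)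
  obtain ⟨g, hg⟩ := hd.isExactOn_ball
  have h0 : (0:ℂ) ∈ ball (0:ℂ) R := mem_ball_self hR
  refine ⟨fun z => g z - g 0, ?_, by simp, ?_⟩
  · intro z hz
    exact ((hg z hz).differentiableAt.sub_const _).differentiableWithinAt
  · have hq : ∀ z ∈ ball (0:ℂ) R, HasDerivAt (fun z => f z * cexp (-(g z - g 0))) 0 z := by
      intro z hz
      have h1 := (hf z).hasDerivAt.mul (((hg z hz).sub_const (g 0)).neg.cexp)
      refine h1.congr_deriv ?_
      have := hne z hz
      field_simp
      ring
    have hconst : ∀ z ∈ ball (0:ℂ) R, f z * cexp (-(g z - g 0)) = f 0 * cexp (-(g 0 - g 0)) := by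
      intro z hz
      exact (convex_ball (0:ℂ) R).is_const_of_fderivWithin_eq_zero (𝕜 := ℂ)
        (f := fun z => f z * cexp (-(g z - g 0)))
        (fun w hw => (hq w hw).differentiableAt.differentiableWithinAt)
        (fun w hw => by
          rw [fderivWithin_of_isOpen isOpen_ball hw]
          rw [(hq w hw).hasFDerivAt.fderiv]
          ext
          simp) hz h0
    intro z hz
    have := hconst z hz
    simp only [sub_self, neg_zero, Complex.exp_zero, mul_one] at this
    rw [← this, mul_assoc, ← Complex.exp_add]
    simp

open Complex Metric in
lemma Xf_lower (hRH : RH) (a : ℝ) (ha : 0 < a) (ha1 : a < 1) (m : ℕ) (hm : 2 ≤ m) :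
    ∃ K : ℝ, 0 < K ∧ ∀ s : ℂ, 1 / 2 + a ≤ s.re → s.re ≤ 2 * m + 1 →
      Real.exp (-(K * (1 + |s.im|))) ≤ ‖Xf s‖ := by
  have hm' : (2:ℝ) ≤ m := by exact_mod_cast hm
  obtain ⟨C, hC, hlow⟩ := Xf_line_lower m hm
  set b : ℝ := 2 * m + 1 with hb
  obtain ⟨D, hD, hup⟩ := Xf_strip 0 (2 * b)
  set R : ℝ := b - 1 / 2 - a / 2 with hR
  set M0 : ℝ := |Real.log D| + 2 * (1 + 2 * b) + C with hM0
  have hM0pos : 0 < M0 := by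
    have := abs_nonneg (Real.log D)
    rw [hM0]; linarith
  refine ⟨C + 2 * M0 * b / (a / 2), by positivity, ?_⟩
  intro s hs1 hs2
  set c : ℂ := (b : ℂ) + s.im * I with hc
  have hcre : c.re = b := by simp [hc]
  have hcim : c.im = s.im := by simp [hc]
  have hRpos : 0 < R := by linarith
  have hball : ∀ z ∈ ball (0:ℂ) R, 1 / 2 < (c + z).re ∧ (c + z).re ≤ 2 * b ∧ ‖c + z‖ ≤ 2 * b + |s.im| := by
    intro z hz
    rw [mem_ball_zero_iff] at hz
    have h1 := abs_re_le_norm z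
    rw [abs_le] at h1
    rw [add_re, hcre]
    refine ⟨by linarith, by linarith, ?_⟩
    refine (norm_add_le _ _).trans ?_
    have : ‖c‖ ≤ b + |s.im| := by
      refine (norm_add_le _ _).trans ?_
      rw [norm_mul, norm_I, mul_one, norm_real, norm_real, Real.norm_eq_abs, Real.norm_eq_abs,
        abs_of_pos (by linarith : 0 < b)]
    linarith
  have hdiff : Differentiable ℂ (fun z => Xf (c + z)) := Xf_differentiable.comp (by fun_prop)
  obtain ⟨g, hg, hg0, hgexp⟩ := exists_log_ball (fun z => Xf (c + z)) hdiff R hRpos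
    (fun z hz => Xf_ne_zero hRH _ (hball z hz).1)
  simp only [add_zero] at hgexp
  have hcl := hlow c hcre
  rw [hcim] at hcl
  set τ := |s.im| with hτ
  have hτ0 : 0 ≤ τ := abs_nonneg _
  have hexp : ∀ z ∈ ball (0:ℂ) R, ‖Xf (c + z)‖ = ‖Xf c‖ * Real.exp (g z).re := by
    intro z hz
    rw [hgexp z hz, norm_mul, norm_exp]
  have hXc : 0 < ‖Xf c‖ := lt_of_lt_of_le (Real.exp_pos _) hcl
  have hmaps : Set.MapsTo g (ball 0 R) {z | z.re ≤ M0 * (1 + τ)} := by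
    intro z hz
    have h1 := hup (c + z) (by linarith [(hball z hz).1]) (hball z hz).2.1
    rw [hexp z hz] at h1
    have h2 : Real.exp (g z).re ≤ Real.exp (M0 * (1 + τ)) := by
      have h3 : Real.exp (-(C * (1 + τ))) * Real.exp (g z).re ≤ D * Real.exp (2 * (2 * b + τ)) := by
        calc _ ≤ ‖Xf c‖ * Real.exp (g z).re := by gcongr
          _ ≤ _ := h1
          _ ≤ D * (1 + (2 * b + τ)) ^ 2 := by gcongr; exact (hball z hz).2.2
          _ ≤ D * (Real.exp (2 * b + τ)) ^ 2 := by
              gcongr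
              rw [add_comm]; exact Real.add_one_le_exp _
          _ = _ := by rw [← Real.exp_nat_mul]; norm_num
      have h4 : Real.exp (g z).re ≤ Real.exp (C * (1 + τ)) * (D * Real.exp (2 * (2 * b + τ))) := by
        rw [Real.exp_neg] at h3
        rwa [inv_mul_le_iff₀ (Real.exp_pos _)] at h3
      refine h4.trans ?_
      nth_rewrite 1 [← Real.exp_log hD]
      rw [← Real.exp_add, ← Real.exp_add]
      apply Real.exp_le_exp.mpr
      have := le_abs_self (Real.log D)
      have := abs_nonneg (Real.log D)
      rw [hM0]
      nlinarith [mul_nonneg this hτ0]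
    exact Real.exp_le_exp.mp h2
  set z : ℂ := ((s.re - b : ℝ) : ℂ) with hz
  have hzn : ‖z‖ = b - s.re := by
    rw [hz, norm_real, Real.norm_eq_abs, abs_of_nonpos (by linarith)]; ring
  have hzb : z ∈ ball (0:ℂ) R := by
    rw [mem_ball_zero_iff, hzn]; linarith
  have bc := borelCaratheodory_zero (by positivity : 0 < M0 * (1 + τ)) hg hmaps hRpos hzb hg0
  have hcz : c + z = s := by
    apply Complex.ext <;> simp [hc, hz]
  have e := hexp z hzb
  rw [hcz] at e
  rw [e]
  have b2 : ‖g z‖ ≤ (2 * M0 * b / (a / 2)) * (1 + τ) := by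
    refine bc.trans ?_
    rw [hzn, div_mul_eq_mul_div]
    have : a / 2 ≤ R - (b - s.re) := by linarith
    have h5 : b - s.re ≤ b := by linarith
    have h6 : 0 ≤ b - s.re := by linarith
    calc _ ≤ 2 * (M0 * (1 + τ)) * b / (a / 2) := by gcongr
      _ = _ := by ring
  have b3 : -‖g z‖ ≤ (g z).re := by
    have := abs_re_le_norm (g z)
    rw [abs_le] at this
    exact this.1
  calc Real.exp (-((C + 2 * M0 * b / (a / 2)) * (1 + τ)))
      = Real.exp (-(C * (1 + τ))) * Real.exp (-((2 * M0 * b / (a / 2)) * (1 + τ))) := by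
        rw [← Real.exp_add]; congr 1; ring
    _ ≤ ‖Xf c‖ * Real.exp (g z).re := by
        gcongr
        linarith

open Complex in
lemma Xf_shift_le (hRH : RH) (a : ℝ) (ha : 0 < a) (ha1 : a < 1 / 4) (s : ℂ) (hs : 1 / 2 + a ≤ s.re) :
    ‖Xf (s - (2 * a : ℝ))‖ ≤ ‖Xf s‖ := by
  obtain ⟨m, hm1⟩ := exists_nat_ge (s.re + 5 + π * 5 ^ (1 / a))
  have hpi := Real.pi_pos
  have h5 : (0:ℝ) < 5 ^ (1 / a) := by positivity
  have hm' : (5:ℝ) ≤ m := by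
    have : 0 < π * 5 ^ (1 / a) := by positivity
    linarith
  have hm2 : 2 ≤ m := by
    have : (2:ℝ) ≤ m := by linarith
    exact_mod_cast this
  obtain ⟨K, hK, hlow⟩ := Xf_lower hRH a ha (by linarith) m hm2
  set b : ℝ := 2 * m + 1 with hb
  obtain ⟨D, hD, hup⟩ := Xf_strip 0 b
  have hne : ∀ z : ℂ, 1 / 2 + a ≤ z.re → Xf z ≠ 0 := fun z hz => Xf_ne_zero hRH z (by linarith)
  have hcl : closure (re ⁻¹' Set.Ioo (1 / 2 + a) b) ⊆ re ⁻¹' Set.Icc (1 / 2 + a) b :=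
    closure_minimal (Set.preimage_mono Set.Ioo_subset_Icc_self) (isClosed_Icc.preimage continuous_re)
  set f : ℂ → ℂ := fun z => Xf (z - (2 * a : ℝ)) / Xf z with hf
  have hdn : Differentiable ℂ (fun z => Xf (z - (2 * a : ℝ))) := Xf_differentiable.comp (by fun_prop)
  have hdc : DiffContOnCl ℂ f (re ⁻¹' Set.Ioo (1 / 2 + a) b) := by
    apply DifferentiableOn.diffContOnCl
    exact hdn.differentiableOn.div Xf_differentiable.differentiableOn (fun z hz => hne z (hcl hz).1)
  have hfin : ‖f s‖ ≤ 1 := by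
    apply PhragmenLindelof.vertical_strip hdc (C := 1) _ _ _ hs
    · have : 0 < π * 5 ^ (1 / a) := by positivity
      linarith
    · refine ⟨0.5 * (π / (b - (1 / 2 + a))), ?_, ?_⟩
      · have : 0 < π / (b - (1 / 2 + a)) := div_pos hpi (by linarith)
        linarith
      · set c : ℝ := 0.5 * (π / (b - (1 / 2 + a))) with hc
        have hcpos : 0 < c := by
          have : 0 < π / (b - (1 / 2 + a)) := div_pos hpi (by linarith)
          rw [hc]; linarith
        refine ⟨(K + 2) * (1 + 1 / c), ?_⟩
        apply Asymptotics.IsBigO.of_bound (D * Real.exp (2 * (b + 1)))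
        apply Filter.eventually_inf_principal.mpr
        refine Filter.Eventually.of_forall ?_
        intro z hz
        have hz1 : 1 / 2 + a < z.re := hz.1
        have hz2 : z.re < b := hz.2
        have h1 := hup (z - (2 * a : ℝ)) (by simp; linarith) (by simp; linarith)
        have h2 := hlow z hz1.le hz2.le
        set τ := |z.im| with hτ
        have hτ0 : 0 ≤ τ := abs_nonneg _
        have h3 : ‖z - (2 * a : ℝ)‖ ≤ b + 1 + τ := by
          refine (norm_sub_le _ _).trans ?_
          have q1 := norm_le_abs_re_add_abs_im z
          rw [abs_of_pos (by linarith)] at q1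
          rw [norm_real, Real.norm_eq_abs, abs_of_pos (by linarith)]
          linarith
        rw [hf, norm_div, Real.norm_eq_abs, abs_of_pos (Real.exp_pos _)]
        rw [div_le_iff₀ (lt_of_lt_of_le (Real.exp_pos _) h2)]
        calc _ ≤ D * (1 + ‖z - (2 * a : ℝ)‖) ^ 2 := h1
          _ ≤ D * (1 + (b + 1 + τ)) ^ 2 := by gcongr
          _ ≤ D * (Real.exp (b + 1 + τ)) ^ 2 := by
              gcongr
              rw [add_comm]; exact Real.add_one_le_exp _
          _ = D * (Real.exp (2 * (b + 1)) * (Real.exp (K + (K + 2) * τ) * Real.exp (-(K * (1 + τ))))) := by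
              rw [← Real.exp_nat_mul, ← Real.exp_add, ← Real.exp_add]
              congr 2
              push_cast; ring
          _ ≤ D * (Real.exp (2 * (b + 1)) * (Real.exp ((K + 2) * (1 + 1 / c) * Real.exp (c * τ)) * ‖Xf z‖)) := by
              gcongr
              have q2 := Real.add_one_le_exp (c * τ)
              have q3 : 1 + τ ≤ (1 + 1 / c) * (c * τ + 1) := by
                have : (1 + 1 / c) * (c * τ + 1) = c * τ + 1 + τ + 1 / c := by
                  field_simp; ring
                rw [this]
                have : 0 < 1 / c := by positivity
                have : 0 ≤ c * τ := by positivity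
                linarith
              calc K + (K + 2) * τ ≤ (K + 2) * (1 + τ) := by nlinarith
                _ ≤ (K + 2) * ((1 + 1 / c) * (c * τ + 1)) := by gcongr
                _ ≤ (K + 2) * ((1 + 1 / c) * Real.exp (c * τ)) := by gcongr
                _ = _ := by ring
          _ = _ := by ring
    · intro z hz
      rw [hf, norm_div]
      have : Xf (z - (2 * a : ℝ)) = starRingEnd ℂ (Xf z) := by
        rw [← Xf_conj, ← Xf_one_sub]
        congr 1
        apply Complex.ext
        · simp [hz]; ring
        · simp
      rw [this, norm_conj]
      exact div_self_le_one _
    · intro z hz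
      rw [hf, norm_div]
      apply div_le_one_of_le₀ _ (norm_nonneg _)
      apply Xf_line_le a ha (by linarith) z (by linarith)
      rw [hz]
      have : 5 * π ^ a = (π * 5 ^ (1 / a)) ^ a := by
        rw [Real.mul_rpow hpi.le h5.le, ← Real.rpow_mul (by norm_num)]
        rw [one_div, inv_mul_cancel₀ ha.ne', Real.rpow_one]
        ring
      rw [this]
      gcongr
      linarith
  have hX : 0 < ‖Xf s‖ := norm_pos_iff.mpr (hne s hs)
  rw [hf, norm_div, div_le_one hX] at hfin
  exact hfin

open Complex in
lemma Xf_re_logDeriv (hRH : RH) (s : ℂ) (hs : 1 / 2 < s.re) : 0 ≤ (logDeriv Xf s).re := by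
  rw [re_logDeriv_eq]
  apply div_nonneg _ (by positivity)
  have h := hasDerivAt_normSq_shift (-1) (Xf_differentiable s).hasDerivAt
  have h1 := (hasDerivAt_const (0:ℝ) (‖Xf s‖ ^ 2)).fun_sub h
  have h2 := deriv_nonneg_of_right h1 (by simp) (ε := min (1 / 4) (s.re - 1 / 2)) (by
    apply lt_min <;> linarith) (by
    intro x hx0 hx
    have hx1 := lt_of_lt_of_le hx (min_le_left _ _)
    have hx2 := lt_of_lt_of_le hx (min_le_right _ _)
    have := Xf_shift_le hRH (x / 2) (by linarith) (by linarith) s (by linarith)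
    have e : s - ((2 * (x / 2) : ℝ) : ℂ) = s + ((-1 * x : ℝ) : ℂ) := by push_cast; ring
    rw [e] at this
    have := pow_le_pow_left₀ (norm_nonneg _) this 2
    linarith)
  linarith


/-- the weighted integral controlling the moments -/
noncomputable def Iw (P : Polynomial ℝ) : ℝ :=
  2 * (∫ x in (0:ℝ)..1, P.eval x * x ^ (1 / 2 : ℝ)) + 3 * (∫ x in (0:ℝ)..1, P.eval x * x ^ (1 : ℝ))
    + ∫ x in (0:ℝ)..1, P.eval x * x ^ (2 : ℝ)

open Complex in
lemma poly_moment_bound (P : Polynomial ℝ) (hP : ∀ x ∈ Set.Icc (0:ℝ) 1, 0 ≤ P.eval x) (v : ℂ)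
    (hv : 0 < v.re) :
    ‖∑ k ∈ Finset.range (P.natDegree + 1), (P.coeff k : ℂ) / (k + 1 + v)‖ ≤
      ∫ x in (0:ℝ)..1, P.eval x * x ^ v.re := by
  have e : ∑ k ∈ Finset.range (P.natDegree + 1), (P.coeff k : ℂ) / (k + 1 + v) =
      ∫ x in (0:ℝ)..1, ((P.eval x : ℝ) : ℂ) * (x : ℂ) ^ v := by
    have h1 : ∀ k : ℕ, (P.coeff k : ℂ) / (k + 1 + v) = ∫ x in (0:ℝ)..1, (P.coeff k : ℂ) * (x : ℂ) ^ ((k : ℂ) + v) := by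
      intro k
      have hk : (0:ℝ) ≤ k := Nat.cast_nonneg k
      rw [intervalIntegral.integral_const_mul, integral_cpow (Or.inl (by simp; linarith))]
      have hne : (k : ℂ) + v + 1 ≠ 0 := by
        intro h
        have := congrArg re h
        simp at this
        linarith
      rw [ofReal_one, ofReal_zero, one_cpow, zero_cpow hne, sub_zero, mul_one_div]
      congr 1
      ring
    simp_rw [h1]
    rw [← intervalIntegral.integral_finset_sum]
    · apply intervalIntegral.integral_congr_ae
      filter_upwards with x hx
      rw [Set.uIoc_of_le zero_le_one] at hx
      rw [Polynomial.eval_eq_sum_range, ofReal_sum, Finset.sum_mul]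
      apply Finset.sum_congr rfl
      intro k hk
      rw [cpow_add _ _ (by exact_mod_cast hx.1.ne'), cpow_natCast]
      push_cast
      ring
    · intro k hk
      apply IntervalIntegrable.const_mul
      apply intervalIntegral.intervalIntegrable_cpow'
      have hk : (0:ℝ) ≤ k := Nat.cast_nonneg k
      simp; linarith
  rw [e]
  refine (intervalIntegral.norm_integral_le_integral_norm zero_le_one).trans (le_of_eq ?_)
  apply intervalIntegral.integral_congr_ae
  filter_upwards with x hx
  rw [Set.uIoc_of_le zero_le_one] at hx
  rw [norm_mul, norm_real, Real.norm_eq_abs, abs_of_nonneg (hP x ⟨hx.1.le, hx.2⟩),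
    norm_cpow_eq_rpow_re_of_pos hx.1]

open Complex in
lemma kernel_comb (P : Polynomial ℝ) (hP : ∀ x ∈ Set.Icc (0:ℝ) 1, 0 ≤ P.eval x) (v al A B : ℂ)
    (hv : v.re = 1 / 2) (hal : ‖al‖ ≤ 2) (hA : ‖A‖ ≤ 3) (hB : ‖B‖ ≤ 1) :
    ‖∑ k ∈ Finset.range (P.natDegree + 1), (P.coeff k : ℂ) * (al / (k + 1 + v) + A / (k + 2) + B / (k + 3))‖
      ≤ Iw P := by
  have b1 := poly_moment_bound P hP v (by rw [hv]; norm_num)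
  have b2 := poly_moment_bound P hP 1 (by simp)
  have b3 := poly_moment_bound P hP 2 (by simp)
  rw [hv] at b1
  rw [one_re] at b2
  rw [re_ofNat] at b3
  have e : ∑ k ∈ Finset.range (P.natDegree + 1), (P.coeff k : ℂ) * (al / (k + 1 + v) + A / (k + 2) + B / (k + 3))
      = al * ∑ k ∈ Finset.range (P.natDegree + 1), (P.coeff k : ℂ) / (k + 1 + v)
        + A * ∑ k ∈ Finset.range (P.natDegree + 1), (P.coeff k : ℂ) / (k + 1 + 1)
        + B * ∑ k ∈ Finset.range (P.natDegree + 1), (P.coeff k : ℂ) / (k + 1 + 2) := by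
    rw [Finset.mul_sum, Finset.mul_sum, Finset.mul_sum, ← Finset.sum_add_distrib, ← Finset.sum_add_distrib]
    apply Finset.sum_congr rfl
    intro k _
    rw [show (k : ℂ) + 1 + 1 = k + 2 by ring, show (k : ℂ) + 1 + 2 = k + 3 by ring]
    ring
  rw [e]
  refine (norm_add₃_le).trans ?_
  rw [norm_mul, norm_mul, norm_mul]
  unfold Iw
  have n3 := norm_nonneg (∑ k ∈ Finset.range (P.natDegree + 1), (P.coeff k : ℂ) / (k + 1 + 2))
  have : ‖B‖ * ‖∑ k ∈ Finset.range (P.natDegree + 1), (P.coeff k : ℂ) / (k + 1 + 2)‖ ≤ ∫ x in (0:ℝ)..1, P.eval x * x ^ (2 : ℝ) := by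
    calc _ ≤ 1 * ‖∑ k ∈ Finset.range (P.natDegree + 1), (P.coeff k : ℂ) / (k + 1 + 2)‖ := by gcongr
      _ ≤ _ := by rw [one_mul]; exact b3
  gcongr

lemma pf_identity (u k : ℂ) (h1 : u + 1 / 2 ≠ 0) (h2 : k + 3 / 2 - u ≠ 0) (h3 : k + 2 ≠ 0)
    (h4 : k + 3 ≠ 0) :
    ((u - 3 / 2) * (k + 3) + k * (u + 3 / 2)) / -(3 * (k + 3 / 2 - u)) / ((k + 2) * (k + 3)) =
    (3/2 - u) / (3/2 * (u + 1/2)) / (k + 3 / 2 - u) + -(9/4 + u/2) / (3/2 * (u + 1/2)) / (k + 2)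
      + 1 / (k + 3) := by
  obtain ⟨p, hp⟩ : ∃ p, p = u + 1 / 2 := ⟨_, rfl⟩
  obtain ⟨d, hd⟩ : ∃ d, d = k + 3 / 2 - u := ⟨_, rfl⟩
  have hu : u = p - 1 / 2 := by rw [hp]; ring
  have hk : k = d + p - 2 := by rw [hd, hp]; ring
  rw [← hp] at h1 ⊢
  rw [← hd] at h2 ⊢
  subst hu hk
  rw [show d + p - 2 + 2 = d + p by ring] at h3 ⊢
  rw [show d + p - 2 + 3 = d + p + 1 by ring] at h4 ⊢
  field_simp
  ring

open Complex in
lemma kernel_bound (P : Polynomial ℝ) (hP : ∀ x ∈ Set.Icc (0:ℝ) 1, 0 ≤ P.eval x) (e : ℂ) (he : ‖e‖ = 1) :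
    |∑ k ∈ Finset.range (P.natDegree + 1), P.coeff k / ((k + 2) * (k + 3)) *
      ((e + (k / (k + 3) : ℝ)) / (e - (k / (k + 3) : ℝ))).re| ≤ Iw P := by
  have hre : ∑ k ∈ Finset.range (P.natDegree + 1), P.coeff k / ((k + 2) * (k + 3)) *
      ((e + (k / (k + 3) : ℝ)) / (e - (k / (k + 3) : ℝ))).re =
      (∑ k ∈ Finset.range (P.natDegree + 1), (P.coeff k : ℂ) *
        (((e + (k / (k + 3) : ℝ)) / (e - (k / (k + 3) : ℝ))) / ((k + 2) * (k + 3)))).re := by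
    rw [re_sum]
    apply Finset.sum_congr rfl
    intro k _
    rw [re_ofReal_mul, show ((k:ℂ) + 2) * (k + 3) = ((((k:ℝ) + 2) * (k + 3) : ℝ) : ℂ) by push_cast; rfl,
      div_ofReal_re]
    ring
  rw [hre]
  refine (abs_re_le_norm _).trans ?_
  have hk2 : ∀ k : ℕ, (k : ℂ) + 2 ≠ 0 := fun k => by exact_mod_cast (by positivity : (k + 2 : ℕ) ≠ 0)
  have hk3 : ∀ k : ℕ, (k : ℂ) + 3 ≠ 0 := fun k => by exact_mod_cast (by positivity : (k + 3 : ℕ) ≠ 0)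
  have hden : ∀ k : ℕ, e * (k + 3) - k ≠ 0 := by
    intro k h
    have h1 : e * ((k + 3 : ℝ) : ℂ) = ((k : ℝ) : ℂ) := by
      push_cast; linear_combination h
    have h2 := congrArg norm h1
    rw [norm_mul, he, norm_real, norm_real, Real.norm_eq_abs, Real.norm_eq_abs, abs_of_nonneg (by positivity), abs_of_nonneg (by positivity)] at h2
    linarith
  have hker : ∀ k : ℕ, ((e + (k / (k + 3) : ℝ)) / (e - (k / (k + 3) : ℝ))) = (e * (k + 3) + k) / (e * (k + 3) - k) := by
    intro k
    push_cast
    have := hk3 k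
    have := hden k
    have : e - (k : ℂ) / (k + 3) = (e * (k + 3) - k) / (k + 3) := by field_simp
    rw [this]
    field_simp
  by_cases h1 : e = 1
  · refine le_trans (le_of_eq ?_) (kernel_comb P hP (1 / 2) 0 (-1 / 3) 1 (by simp) (by simp) (by norm_num) (by simp))
    congr 1
    apply Finset.sum_congr rfl
    intro k _
    rw [hker]
    have := hk2 k
    have := hk3 k
    rw [h1]
    have : (1:ℂ) * (k + 3) - k = 3 := by ring
    rw [this]
    field_simp
    ring
  · have h1' : 1 - e ≠ 0 := sub_ne_zero.mpr (Ne.symm h1)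
    set u : ℂ := 3 / 2 * ((1 + e) / (1 - e)) with hu
    have hure : u.re = 0 := by
      have : ((1 + e) / (1 - e)).re = 0 := by
        rw [div_re, ← add_div]
        have : e.re ^ 2 + e.im ^ 2 = 1 := by
          have := Complex.sq_norm e
          rw [he, normSq_apply] at this
          linarith
        simp only [add_re, sub_re, add_im, sub_im, one_re, one_im]
        rw [div_eq_zero_iff]
        left
        linarith
      rw [hu, show (3 / 2 : ℂ) = ((3 / 2 : ℝ) : ℂ) by push_cast; rfl, re_ofReal_mul, this, mul_zero]
    have hu1 : u + 1 / 2 ≠ 0 := by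
      intro h
      have := congrArg re h
      rw [add_re, hure] at this
      norm_num at this
    have hu3 : u + 3 / 2 ≠ 0 := by
      intro h
      have := congrArg re h
      rw [add_re, hure] at this
      norm_num at this
    have heu : e = (u - 3 / 2) / (u + 3 / 2) := by
      rw [eq_div_iff hu3, hu]
      field_simp
      ring
    have heu2 : e * (u + 3 / 2) = u - 3 / 2 := by
      rw [eq_div_iff hu3] at heu
      exact heu
    have hku : ∀ k : ℕ, (k : ℂ) + 3 / 2 - u ≠ 0 := by
      intro k h
      have := congrArg re h
      rw [sub_re, add_re, hure, natCast_re] at this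
      norm_num at this
      linarith [(Nat.cast_nonneg k : (0:ℝ) ≤ k)]
    have hnu : ∀ p q : ℝ, ‖(p : ℂ) + q * u‖ ^ 2 = p ^ 2 + q ^ 2 * u.im ^ 2 := by
      intro p q
      rw [Complex.sq_norm, normSq_apply]
      simp [hure]
      ring
    have hu1p : 0 < ‖u + 1 / 2‖ := norm_pos_iff.mpr hu1
    have q1 := hnu (1/2) 1
    rw [show (((1/2 : ℝ) : ℂ) + (1:ℝ) * u) = u + 1 / 2 by push_cast; ring] at q1
    refine le_trans (le_of_eq ?_) (kernel_comb P hP (1 / 2 - u) ((3/2 - u) / (3/2 * (u + 1/2)))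
      (-(9/4 + u/2) / (3/2 * (u + 1/2))) 1 (by simp [hure]) ?_ ?_ (by simp))
    · congr 1
      apply Finset.sum_congr rfl
      intro k _
      rw [hker]
      congr 1
      have := hk2 k
      have := hk3 k
      have := hku k
      have h5 : (k : ℂ) + 1 + (1 / 2 - u) = k + 3 / 2 - u := by ring
      rw [h5]
      have h6 : e * (k + 3) + k = ((u - 3 / 2) * (k + 3) + k * (u + 3 / 2)) / (u + 3 / 2) := by
        rw [eq_div_iff hu3]; linear_combination (k + 3) * heu2
      have h7 : e * (k + 3) - k = -(3 * (k + 3 / 2 - u)) / (u + 3 / 2) := by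
        rw [eq_div_iff hu3]; linear_combination (k + 3) * heu2
      rw [h6, h7]
      rw [div_div_div_cancel_right₀ hu3]
      exact pf_identity u k hu1 (hku k) (hk2 k) (hk3 k)
    · rw [norm_div, div_le_iff₀ (by rw [norm_mul]; exact mul_pos (by norm_num) hu1p), norm_mul]
      apply le_of_sq_le_sq _ (by positivity)
      rw [mul_pow, mul_pow, q1]
      have q2 := hnu (3/2) (-1)
      rw [show (((3/2 : ℝ) : ℂ) + (-1:ℝ) * u) = 3 / 2 - u by push_cast; ring] at q2
      rw [q2]
      norm_num
      nlinarith [sq_nonneg u.im]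
    · rw [norm_div, div_le_iff₀ (by rw [norm_mul]; exact mul_pos (by norm_num) hu1p), norm_mul, norm_neg]
      apply le_of_sq_le_sq _ (by positivity)
      rw [mul_pow, mul_pow, q1]
      have q2 := hnu (9/4) (1/2)
      rw [show (((9/4 : ℝ) : ℂ) + (1/2:ℝ) * u) = 9 / 4 + u / 2 by push_cast; ring] at q2
      rw [q2]
      norm_num
      nlinarith [sq_nonneg u.im]


open Complex Metric in
lemma poisson_re (h : ℂ → ℂ) (hh : DiffContOnCl ℂ h (ball 0 1)) (w : ℂ) (hw : w ∈ ball (0:ℂ) 1) :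
    Real.circleAverage (fun z => ((z + w) / (z - w)).re * (h z).re) 0 1 = (h w).re := by
  have e := hh.circleAverage_re_herglotzRieszKernel_smul' hw
  simp only [sub_zero] at e
  have hc : ContinuousOn h (sphere 0 |1|) := by
    rw [abs_one]
    refine hh.continuousOn_ball.mono sphere_subset_closedBall
  have hk : ContinuousOn (fun z : ℂ => ((z + w) / (z - w)).re) (sphere 0 |1|) := by
    apply continuous_re.comp_continuousOn
    apply ContinuousOn.div (by fun_prop) (by fun_prop)
    intro z hz h0
    rw [abs_one, mem_sphere_zero_iff_norm] at hz
    rw [mem_ball_zero_iff] at hw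
    rw [sub_eq_zero] at h0
    rw [h0] at hz
    linarith
  have hcircInt : CircleIntegrable (fun z => ((z + w) / (z - w)).re • h z) 0 1 :=
    (hk.smul hc).circleIntegrable'
  have e2 := reCLM.circleAverage_comp_comm hcircInt
  rw [e] at e2
  rw [← reCLM_apply, ← e2]
  congr 1
  funext z
  simp

open Complex Metric in
lemma avg_bound (h : ℂ → ℂ) (hh : DiffContOnCl ℂ h (ball 0 1)) (hpos : ∀ z ∈ sphere (0:ℂ) 1, 0 ≤ (h z).re)
    (P : Polynomial ℝ) (hP : ∀ x ∈ Set.Icc (0:ℝ) 1, 0 ≤ P.eval x) :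
    |∑ k ∈ Finset.range (P.natDegree + 1), P.coeff k / ((k + 2) * (k + 3)) *
      (h ((k / (k + 3) : ℝ) : ℂ)).re| ≤ Iw P * (h 0).re := by
  have hzk : ∀ k : ℕ, ((k / (k + 3) : ℝ) : ℂ) ∈ ball (0:ℂ) 1 := by
    intro k
    rw [mem_ball_zero_iff, norm_real, Real.norm_eq_abs, abs_of_nonneg (by positivity), div_lt_one (by positivity)]
    linarith
  have hc : ContinuousOn (fun z => (h z).re) (sphere 0 |1|) := by
    rw [abs_one]
    exact continuous_re.comp_continuousOn (hh.continuousOn_ball.mono sphere_subset_closedBall)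
  have hk : ∀ k : ℕ, ContinuousOn (fun z : ℂ => ((z + (k / (k + 3) : ℝ)) / (z - (k / (k + 3) : ℝ))).re) (sphere 0 |1|) := by
    intro k
    apply continuous_re.comp_continuousOn
    apply ContinuousOn.div (by fun_prop) (by fun_prop)
    intro z hz h0
    have hw := hzk k
    rw [abs_one, mem_sphere_zero_iff_norm] at hz
    rw [mem_ball_zero_iff] at hw
    rw [sub_eq_zero] at h0
    rw [h0] at hz
    linarith
  set Φ : ℂ → ℝ := fun e => ∑ k ∈ Finset.range (P.natDegree + 1), P.coeff k / ((k + 2) * (k + 3)) *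
      ((e + (k / (k + 3) : ℝ)) / (e - (k / (k + 3) : ℝ))).re with hΦ
  have hΦc : ContinuousOn Φ (sphere 0 |1|) := by
    apply continuousOn_finset_sum
    intro k _
    exact continuousOn_const.mul (hk k)
  have key : ∑ k ∈ Finset.range (P.natDegree + 1), P.coeff k / ((k + 2) * (k + 3)) *
      (h ((k / (k + 3) : ℝ) : ℂ)).re = Real.circleAverage (fun z => Φ z * (h z).re) 0 1 := by
    have e1 : (fun z : ℂ => Φ z * (h z).re) = fun z : ℂ => ∑ k ∈ Finset.range (P.natDegree + 1),
        (P.coeff k / ((k + 2) * (k + 3)) : ℝ) • (((z + (k / (k + 3) : ℝ)) / (z - (k / (k + 3) : ℝ))).re * (h z).re) := by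
      funext z
      rw [hΦ, Finset.sum_mul]
      apply Finset.sum_congr rfl
      intro k _
      rw [smul_eq_mul]; ring
    rw [e1, Real.circleAverage_fun_sum]
    · apply Finset.sum_congr rfl
      intro k _
      rw [Real.circleAverage_fun_smul, poisson_re h hh _ (hzk k), smul_eq_mul]
    · intro k _
      exact (((hk k).mul hc).fun_const_smul _).circleIntegrable'
  have e0 : Real.circleAverage (fun z => (h z).re) 0 1 = (h 0).re := by
    rw [← poisson_re h hh 0 (by simp)]
    apply Real.circleAverage_congr_sphere
    intro z hz
    rw [abs_one, mem_sphere_zero_iff_norm] at hz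
    have : z ≠ 0 := by rintro rfl; simp at hz
    simp [div_self this]
  have i1 : CircleIntegrable (fun z => Φ z * (h z).re) 0 1 := (hΦc.mul hc).circleIntegrable'
  have i2 : CircleIntegrable (fun z => Iw P • (h z).re) 0 1 := (hc.fun_const_smul _).circleIntegrable'
  have i3 : CircleIntegrable (fun z => (-Iw P) • (h z).re) 0 1 := (hc.fun_const_smul _).circleIntegrable'
  have hb : ∀ z ∈ sphere (0:ℂ) |1|, |Φ z| ≤ Iw P := by
    intro z hz
    rw [abs_one, mem_sphere_zero_iff_norm] at hz
    exact kernel_bound P hP z hz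
  rw [key, abs_le]
  constructor
  · have := Real.circleAverage_mono i3 i1 (by
      intro z hz
      have h1 := (abs_le.mp (hb z hz)).1
      rw [abs_one] at hz
      have h2 := hpos z hz
      simp only [smul_eq_mul]
      gcongr)
    rw [Real.circleAverage_fun_smul, e0, smul_eq_mul] at this
    linarith
  · have := Real.circleAverage_mono i1 i2 (by
      intro z hz
      have h1 := (abs_le.mp (hb z hz)).2
      rw [abs_one] at hz
      have h2 := hpos z hz
      simp only [smul_eq_mul]
      gcongr)
    rw [Real.circleAverage_fun_smul, e0, smul_eq_mul] at this
    linarith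

open Complex Metric in
lemma herglotz_moment (F : ℂ → ℂ) (hF : DifferentiableOn ℂ F {s | 1 / 2 < s.re})
    (hpos : ∀ s : ℂ, 1 / 2 < s.re → 0 ≤ (F s).re)
    (P : Polynomial ℝ) (hP : ∀ x ∈ Set.Icc (0:ℝ) 1, 0 ≤ P.eval x) :
    |∑ k ∈ Finset.range (P.natDegree + 1), P.coeff k / ((k + 2) * (k + 3)) *
      (F (k + 2)).re| ≤ Iw P * (F 2).re := by
  set φ : ℂ → ℂ := fun z => (2 + z) / (1 - z) with hφ
  have hne : ∀ z ∈ ball (0:ℂ) 1, 1 - z ≠ 0 := by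
    intro z hz h0
    rw [mem_ball_zero_iff] at hz
    rw [sub_eq_zero] at h0
    rw [← h0, norm_one] at hz
    exact lt_irrefl _ hz
  have hφm : ∀ z ∈ ball (0:ℂ) 1, 1 / 2 < (φ z).re := by
    intro z hz
    have h0 := hne z hz
    have e : φ z = 1 / 2 + 3 / 2 * ((1 + z) / (1 - z)) := by
      rw [hφ]; field_simp; ring
    have : 0 < ((1 + z) / (1 - z)).re := by
      rw [div_re, ← add_div]
      apply div_pos _ (normSq_pos.mpr h0)
      rw [mem_ball_zero_iff] at hz
      have h2 : normSq z < 1 := by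
        rw [normSq_eq_norm_sq]
        have := norm_nonneg z
        nlinarith
      rw [normSq_apply] at h2
      simp only [add_re, sub_re, add_im, sub_im, one_re, one_im]
      nlinarith
    rw [e, show (3 / 2 : ℂ) = ((3 / 2 : ℝ) : ℂ) by push_cast; rfl, add_re, re_ofReal_mul,
      show (1 / 2 : ℂ) = ((1 / 2 : ℝ) : ℂ) by push_cast; rfl, ofReal_re]
    linarith
  set g : ℂ → ℂ := fun z => F (φ z) with hg
  have hgd : DifferentiableOn ℂ g (ball 0 1) := by
    apply hF.comp _ hφm
    apply DifferentiableOn.div (by fun_prop) (by fun_prop) hne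
  have hball : ∀ r : ℝ, 0 < r → r < 1 → ∀ z ∈ closedBall (0:ℂ) 1, (r : ℂ) * z ∈ ball (0:ℂ) 1 := by
    intro r h0 h1 z hz
    rw [mem_closedBall_zero_iff] at hz
    rw [mem_ball_zero_iff, norm_mul, norm_real, Real.norm_eq_abs, abs_of_pos h0]
    have := norm_nonneg z
    nlinarith
  have hr : ∀ r : ℝ, 0 < r → r < 1 → |∑ k ∈ Finset.range (P.natDegree + 1), P.coeff k / ((k + 2) * (k + 3)) *
      (g (r * ((k / (k + 3) : ℝ) : ℂ))).re| ≤ Iw P * (F 2).re := by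
    intro r h0 h1
    have := avg_bound (fun z => g (r * z)) (by
      apply DifferentiableOn.diffContOnCl
      rw [closure_ball _ one_ne_zero]
      exact hgd.comp (by fun_prop) (hball r h0 h1)) (by
      intro z hz
      exact hpos _ (hφm _ (hball r h0 h1 z (sphere_subset_closedBall hz)))) P hP
    have e : g (r * 0) = F 2 := by simp [hg, hφ]
    rwa [e] at this
  have hzk : ∀ k : ℕ, ((k / (k + 3) : ℝ) : ℂ) ∈ ball (0:ℂ) 1 := by
    intro k
    rw [mem_ball_zero_iff, norm_real, Real.norm_eq_abs, abs_of_nonneg (by positivity), div_lt_one (by positivity)]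
    linarith
  have hgz : ∀ k : ℕ, g ((k / (k + 3) : ℝ) : ℂ) = F (k + 2) := by
    intro k
    have hk3 : (k : ℂ) + 3 ≠ 0 := by exact_mod_cast (by positivity : (k + 3 : ℕ) ≠ 0)
    have h1 : 1 - (k : ℂ) / (k + 3) = 3 / (k + 3) := by field_simp; ring
    have h2 : (2 + (k : ℂ) / (k + 3)) / (1 - (k : ℂ) / (k + 3)) = k + 2 := by
      rw [h1, div_div_eq_mul_div, div_eq_iff (by norm_num)]
      field_simp
      ring
    simp only [hg, hφ]
    push_cast
    rw [h2]
  have hlim : Filter.Tendsto (fun r : ℝ => |∑ k ∈ Finset.range (P.natDegree + 1), P.coeff k / ((k + 2) * (k + 3)) *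
      (g (r * ((k / (k + 3) : ℝ) : ℂ))).re|) (nhdsWithin 1 (Set.Iio 1)) (nhds (|∑ k ∈ Finset.range (P.natDegree + 1), P.coeff k / ((k + 2) * (k + 3)) *
      (F (k + 2)).re|)) := by
    apply Filter.Tendsto.abs
    apply tendsto_finset_sum
    intro k _
    apply Filter.Tendsto.const_mul
    rw [← hgz k]
    apply (continuous_re.tendsto _).comp
    have hc : ContinuousAt g ((k / (k + 3) : ℝ) : ℂ) := (hgd.continuousOn).continuousAt (isOpen_ball.mem_nhds (hzk k))
    have hc2 : ContinuousAt (fun r : ℝ => g (r * ((k / (k + 3) : ℝ) : ℂ))) 1 := by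
      apply ContinuousAt.comp (g := g)
      · simpa using hc
      · fun_prop
    have := hc2.tendsto
    simp only [ofReal_one, one_mul] at this
    exact this.mono_left nhdsWithin_le_nhds
  refine le_of_tendsto hlim ?_
  filter_upwards [Ioo_mem_nhdsLT (zero_lt_one' ℝ)] with r hr'
  exact hr r hr'.1 hr'.2


noncomputable def Af (s : ℂ) : ℂ := (Complex.digamma (s / 2 + 1) + (Real.eulerMascheroniConstant : ℂ)) / 2

open Complex in
lemma Xf_logDeriv_eq (s : ℂ) (hs : 1 < s.re) :
    logDeriv Xf s = 1 / (s - 1) + (Complex.digamma (s / 2 + 1) - (Real.log π : ℂ)) / 2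
      - LSeries (fun n => (ArithmeticFunction.vonMangoldt n : ℂ)) s := by
  have hs1 : s ≠ 1 := by rintro rfl; simp at hs
  have hs0 : s ≠ 0 := by rintro rfl; simp at hs; linarith
  have hs2 : 0 < (s / 2).re := by simp; linarith
  have hg0 : ∀ m : ℕ, s / 2 ≠ -m := by
    intro m h
    rw [h] at hs2; simp at hs2
    have : (0:ℝ) ≤ m := by positivity
    linarith
  have hz : riemannZeta s ≠ 0 := riemannZeta_ne_zero_of_one_le_re hs.le
  have hdz : DifferentiableAt ℂ riemannZeta s := differentiableAt_riemannZeta hs1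
  have hpi : (π : ℂ) ≠ 0 := by exact_mod_cast Real.pi_ne_zero
  have hdg : DifferentiableAt ℂ (fun z : ℂ => Gamma (z / 2)) s :=
    (differentiableAt_Gamma (s / 2) hg0).comp s (by fun_prop)
  have hdp : HasDerivAt (fun z : ℂ => (π : ℂ) ^ (-z / 2)) ((π : ℂ) ^ (-s / 2) * log π * (-1 / 2)) s := by
    apply HasDerivAt.const_cpow
    · exact ((hasDerivAt_id s).neg).div_const 2
    · left; exact hpi
  have hev : Xf =ᶠ[nhds s] fun z => (z * (z - 1)) * ((π : ℂ) ^ (-z / 2) * Gamma (z / 2)) * riemannZeta z := by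
    have : {z : ℂ | 1 < z.re} ∈ nhds s := (isOpen_lt continuous_const continuous_re).mem_nhds hs
    filter_upwards [this] with z hz
    have hz' : 1 < z.re := hz
    rw [Xf_eq z (by linarith) (by rintro rfl; simp at hz'), Gammaℝ_def]
  have e : logDeriv Xf s = logDeriv (fun z => (z * (z - 1)) * ((π : ℂ) ^ (-z / 2) * Gamma (z / 2)) * riemannZeta z) s := by
    rw [logDeriv_apply, logDeriv_apply, hev.deriv_eq, hev.eq_of_nhds]
  have hG0 : Gamma (s / 2) ≠ 0 := Gamma_ne_zero hg0
  have hp0 : (π : ℂ) ^ (-s / 2) ≠ 0 := by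
    rw [cpow_def_of_ne_zero hpi]; exact exp_ne_zero _
  have hsub : s - 1 ≠ 0 := sub_ne_zero.mpr hs1
  rw [e, logDeriv_mul (f := fun z : ℂ => (z * (z - 1)) * ((π : ℂ) ^ (-z / 2) * Gamma (z / 2))) s (mul_ne_zero (mul_ne_zero hs0 hsub) (mul_ne_zero hp0 hG0)) hz
      ((by fun_prop : DifferentiableAt ℂ (fun z : ℂ => z * (z - 1)) s).mul (hdp.differentiableAt.mul hdg)) hdz,
    logDeriv_mul (f := fun z : ℂ => z * (z - 1)) (g := fun z : ℂ => (π : ℂ) ^ (-z / 2) * Gamma (z / 2)) s (mul_ne_zero hs0 hsub) (mul_ne_zero hp0 hG0) (by fun_prop)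
      (hdp.differentiableAt.mul hdg),
    logDeriv_mul (f := fun z : ℂ => z) (g := fun z : ℂ => z - 1) s hs0 hsub (by fun_prop) (by fun_prop),
    logDeriv_mul (f := fun z : ℂ => (π : ℂ) ^ (-z / 2)) (g := fun z : ℂ => Gamma (z / 2)) s hp0 hG0 hdp.differentiableAt hdg]
  have h1 : logDeriv (fun z : ℂ => z) s = 1 / s := by simp [logDeriv_apply]
  have h2 : logDeriv (fun z : ℂ => z - 1) s = 1 / (s - 1) := by simp [logDeriv_apply]
  have h3 : logDeriv (fun z : ℂ => (π : ℂ) ^ (-z / 2)) s = - Real.log π / 2 := by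
    rw [logDeriv_apply, hdp.deriv, ← ofReal_log Real.pi_pos.le]
    field_simp
  have h4 : logDeriv (fun z : ℂ => Gamma (z / 2)) s = digamma (s / 2) / 2 := by
    have := logDeriv_comp (f := Gamma) (g := fun z : ℂ => z / 2) (x := s) (differentiableAt_Gamma _ hg0) (by fun_prop)
    have e2 : deriv (fun z : ℂ => z / 2) s = 1 / 2 := by simp
    rw [e2] at this
    rw [digamma_def, div_eq_mul_one_div (logDeriv Gamma _)]
    exact this
  have h5 : logDeriv riemannZeta s = - LSeries (fun n => (ArithmeticFunction.vonMangoldt n : ℂ)) s := by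
    rw [ArithmeticFunction.LSeries_vonMangoldt_eq_deriv_riemannZeta_div hs, logDeriv_apply]; ring
  rw [h1, h2, h3, h4, h5, digamma_apply_add_one _ hg0]
  field_simp
  ring

lemma G_diff (hRH : RH) : DifferentiableOn ℂ (logDeriv Xf) {s | 1 / 2 < s.re} := by
  intro s hs
  have : DifferentiableAt ℂ (fun z => deriv Xf z / Xf z) s := by
    apply DifferentiableAt.div _ (Xf_differentiable s) (Xf_ne_zero hRH s hs)
    exact (Xf_differentiable.differentiableOn.deriv isOpen_univ).differentiableAt Filter.univ_mem
  exact this.differentiableWithinAt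

open Complex in
lemma Af_diff : DifferentiableOn ℂ Af {s | 1 / 2 < s.re} := by
  intro s hs
  have hs' : 1 / 2 < s.re := hs
  have hd : ∀ z : ℂ, 0 < z.re → DifferentiableAt ℂ digamma z := by
    intro z hz
    have hn : ∀ z : ℂ, 0 < z.re → ∀ m : ℕ, z ≠ -m := by
      intro z hz m h
      rw [h] at hz; simp at hz
      have : (0:ℝ) ≤ m := by positivity
      linarith
    have ho : IsOpen {z : ℂ | 0 < z.re} := isOpen_lt continuous_const continuous_re
    have h1 : DifferentiableOn ℂ Gamma {z : ℂ | 0 < z.re} := fun w hw =>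
      (differentiableAt_Gamma w (hn w hw)).differentiableWithinAt
    have : DifferentiableAt ℂ (fun z => deriv Gamma z / Gamma z) z := by
      apply DifferentiableAt.div _ (differentiableAt_Gamma z (hn z hz)) (Gamma_ne_zero (hn z hz))
      exact (h1.deriv ho).differentiableAt (ho.mem_nhds hz)
    rw [digamma_def]
    exact this
  have h2 : DifferentiableAt ℂ (fun z : ℂ => digamma (z / 2 + 1)) s :=
    (hd (s / 2 + 1) (by simp; linarith)).comp s (by fun_prop)
  exact ((h2.add_const _).div_const 2).differentiableWithinAt

open Complex in
lemma Af_re (s : ℂ) (hs : 1 / 2 < s.re) : 0 ≤ (Af s).re := by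
  have := re_digamma_ge' (s / 2 + 1) (by simp; linarith)
  unfold Af
  rw [show (2:ℂ) = ((2:ℝ):ℂ) by norm_num, div_ofReal_re, add_re, ofReal_re]
  push_cast
  linarith

lemma L_re (k : ℕ) : (LSeries (fun n => (ArithmeticFunction.vonMangoldt n : ℂ)) (k + 2)).re =
    ∑' n : ℕ, ArithmeticFunction.vonMangoldt n / (n : ℝ) ^ (k + 2) ∧
    Summable (fun n : ℕ => ArithmeticFunction.vonMangoldt n / (n : ℝ) ^ (k + 2)) := by
  have hs := ArithmeticFunction.LSeriesSummable_vonMangoldt (s := (k + 2 : ℂ)) (by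
    have : (0:ℝ) ≤ k := by positivity
    simp
    linarith)
  have e : LSeries.term (fun n => (ArithmeticFunction.vonMangoldt n : ℂ)) (k + 2) =
      fun n : ℕ => ((ArithmeticFunction.vonMangoldt n / (n : ℝ) ^ (k + 2) : ℝ) : ℂ) := by
    ext n
    rw [LSeries.term_def]
    split_ifs with h
    · simp [h]
    · push_cast
      congr 1
      exact_mod_cast Complex.cpow_natCast (n : ℂ) (k + 2)
  unfold LSeriesSummable at hs
  rw [e] at hs
  rw [LSeries, e]
  constructor
  · rw [← Complex.ofReal_tsum, Complex.ofReal_re]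
  · exact_mod_cast hs

noncomputable def c0 : ℝ := (Real.eulerMascheroniConstant + Real.log π) / 2

lemma log_pi_bounds : 1 < Real.log π ∧ Real.log π < 1.2 := by
  constructor
  · rw [Real.lt_log_iff_exp_lt Real.pi_pos]
    linarith [Real.exp_one_lt_d9, Real.pi_gt_three]
  · rw [Real.log_lt_iff_lt_exp Real.pi_pos]
    have h := Real.exp_one_gt_d9
    have h2 : (1.2:ℝ) ≤ Real.exp 0.2 := by linarith [Real.add_one_le_exp (0.2:ℝ)]
    have : Real.exp 1.2 = Real.exp 1 * Real.exp 0.2 := by rw [← Real.exp_add]; norm_num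
    rw [this]
    nlinarith [Real.pi_lt_d4]

lemma c0_bounds : 0.75 < c0 ∧ c0 < 1 := by
  have := log_pi_bounds
  have h1 := Real.one_half_lt_eulerMascheroniConstant
  have h2 := Real.eulerMascheroniConstant_lt_two_thirds
  unfold c0
  constructor <;> linarith

lemma diff_re (k : ℕ) : (Af (k + 2)).re - (logDeriv Xf (k + 2)).re = c0 - 1 / (k + 1) +
    ∑' n : ℕ, ArithmeticFunction.vonMangoldt n / (n : ℝ) ^ (k + 2) := by
  rw [← (L_re k).1, Xf_logDeriv_eq _ (by
    have : (0:ℝ) ≤ k := by positivity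
    simp
    linarith), ← Complex.sub_re]
  have hk : (k : ℂ) + 1 ≠ 0 := by exact_mod_cast (Nat.succ_ne_zero k)
  have : (Af (k + 2) - (1 / ((k + 2 : ℂ) - 1) + (Complex.digamma ((k + 2) / 2 + 1) - (Real.log π : ℂ)) / 2
      - LSeries (fun n => (ArithmeticFunction.vonMangoldt n : ℂ)) (k + 2))) =
      ((c0 - 1 / (k + 1) : ℝ) : ℂ) + LSeries (fun n => (ArithmeticFunction.vonMangoldt n : ℂ)) (k + 2) := by
    rw [Af, c0]
    push_cast
    rw [show (k : ℂ) + 2 - 1 = k + 1 by ring]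
    field_simp
    ring
  rw [this, Complex.add_re, Complex.ofReal_re]

lemma Af_two : (Af 2).re = 1 / 2 := by
  have : Af 2 = ((1 / 2 : ℝ) : ℂ) := by
    unfold Af
    rw [show (2:ℂ) / 2 = 1 by norm_num, Complex.digamma_apply_add_one 1 (by
      intro m h
      have := congrArg Complex.re h
      simp at this
      have h2 : (0:ℝ) ≤ m := by positivity
      linarith), Complex.digamma_one]
    push_cast
    ring
  rw [this, Complex.ofReal_re]

lemma G_two : (logDeriv Xf 2).re ≤ 3 / 4 := by
  have h := diff_re 0
  simp only [Nat.cast_zero, zero_add] at h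
  rw [Af_two] at h
  have h2 : 0 ≤ ∑' n : ℕ, ArithmeticFunction.vonMangoldt n / (n : ℝ) ^ 2 :=
    tsum_nonneg fun n => div_nonneg ArithmeticFunction.vonMangoldt_nonneg (by positivity)
  have := c0_bounds
  norm_num at h
  linarith

lemma main_moment (hRH : RH) (P : Polynomial ℝ) (hP : ∀ x ∈ Set.Icc (0:ℝ) 1, 0 ≤ P.eval x) :
    |∑ k ∈ Finset.range (P.natDegree + 1), P.coeff k / ((k + 2) * (k + 3)) *
      (c0 - 1 / (k + 1) + ∑' n : ℕ, ArithmeticFunction.vonMangoldt n / (n : ℝ) ^ (k + 2))| ≤ 5 / 4 * Iw P := by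
  have h1 := herglotz_moment Af Af_diff Af_re P hP
  have h2 := herglotz_moment (logDeriv Xf) (G_diff hRH) (Xf_re_logDeriv hRH) P hP
  have hI : 0 ≤ Iw P := by
    have : ∀ r : ℝ, 0 ≤ ∫ x in (0:ℝ)..1, P.eval x * x ^ r := by
      intro r
      apply intervalIntegral.integral_nonneg zero_le_one
      intro x hx
      exact mul_nonneg (hP x hx) (Real.rpow_nonneg hx.1 _)
    unfold Iw
    linarith [this (1/2), this 1, this 2]
  have e : ∑ k ∈ Finset.range (P.natDegree + 1), P.coeff k / ((k + 2) * (k + 3)) *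
      (c0 - 1 / (k + 1) + ∑' n : ℕ, ArithmeticFunction.vonMangoldt n / (n : ℝ) ^ (k + 2)) =
      ∑ k ∈ Finset.range (P.natDegree + 1), P.coeff k / ((k + 2) * (k + 3)) * (Af (k + 2)).re -
      ∑ k ∈ Finset.range (P.natDegree + 1), P.coeff k / ((k + 2) * (k + 3)) * (logDeriv Xf (k + 2)).re := by
    rw [← Finset.sum_sub_distrib]
    apply Finset.sum_congr rfl
    intro k _
    rw [← diff_re k]
    ring
  rw [e]
  rw [Af_two] at h1
  have h3 := mul_le_mul_of_nonneg_left G_two hI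
  refine (abs_sub _ _).trans ?_
  linarith


noncomputable def fV (n : ℕ) (x : ℝ) : ℝ := ArithmeticFunction.vonMangoldt n * max (x - n * x ^ 2) 0

noncomputable def Vf (x : ℝ) : ℝ := ∑' n : ℕ, fV n x

lemma fV_cont (n : ℕ) : Continuous (fV n) := by
  unfold fV
  fun_prop

lemma fV_nonneg (n : ℕ) (x : ℝ) : 0 ≤ fV n x :=
  mul_nonneg ArithmeticFunction.vonMangoldt_nonneg (le_max_right _ _)

lemma fV_eq_zero (n : ℕ) (x : ℝ) (hx : 0 ≤ x) (h : 1 ≤ n * x) : fV n x = 0 := by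
  unfold fV
  rw [max_eq_right (by nlinarith), mul_zero]

lemma Vf_eq_sum (a : ℝ) (ha : 0 < a) (N : ℕ) (hN : 1 ≤ N * a) (x : ℝ) (hx : a ≤ x) :
    Vf x = ∑ n ∈ Finset.range N, fV n x := by
  unfold Vf
  apply tsum_eq_sum
  intro n hn
  simp only [Finset.mem_range, not_lt] at hn
  apply fV_eq_zero n x (by linarith)
  have : (N : ℝ) ≤ n := by exact_mod_cast hn
  nlinarith [mul_le_mul this hx ha.le (by positivity : (0:ℝ) ≤ n)]

lemma Vf_contAt (x : ℝ) (hx : 0 < x) : ContinuousAt Vf x := by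
  obtain ⟨N, hN⟩ := exists_nat_ge (1 / (x / 2))
  have hN' : 1 ≤ N * (x / 2) := by rwa [div_le_iff₀ (by positivity)] at hN
  have : Vf =ᶠ[nhds x] fun y => ∑ n ∈ Finset.range N, fV n y := by
    filter_upwards [Ioi_mem_nhds (show x / 2 < x by linarith)] with y hy
    exact Vf_eq_sum (x / 2) (by positivity) N hN' y (le_of_lt hy)
  apply ContinuousAt.congr _ this.symm
  exact (continuous_finset_sum _ fun n _ => fV_cont n).continuousAt

lemma fV_moment (n k : ℕ) : ∫ x in (0:ℝ)..1, fV n x * x ^ k =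
    1 / ((k + 2) * (k + 3)) * (ArithmeticFunction.vonMangoldt n / (n : ℝ) ^ (k + 2)) := by
  rcases Nat.eq_zero_or_pos n with rfl | hn
  · simp [fV]
  have hn' : (1:ℝ) ≤ n := by exact_mod_cast hn
  have hn0 : (0:ℝ) < n := by linarith
  have hinv : (1:ℝ) / n ≤ 1 := by rw [div_le_one hn0]; exact hn'
  have hc : Continuous fun x : ℝ => fV n x * x ^ k := (fV_cont n).mul (by fun_prop)
  rw [← intervalIntegral.integral_add_adjacent_intervals (b := 1 / (n:ℝ)) (hc.intervalIntegrable _ _) (hc.intervalIntegrable _ _)]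
  have h2 : ∫ x in (1 / (n:ℝ))..1, fV n x * x ^ k = 0 := by
    rw [intervalIntegral.integral_congr (g := fun _ => 0)]
    · simp
    · intro x hx
      rw [Set.uIcc_of_le hinv] at hx
      have : 0 < 1 / (n:ℝ) := by positivity
      have h3 := hx.1
      rw [div_le_iff₀ hn0] at h3
      simp only [fV_eq_zero n x (by linarith [hx.1]) (by linarith), zero_mul]
  have h1 : ∫ x in (0:ℝ)..(1 / (n:ℝ)), fV n x * x ^ k =
      ∫ x in (0:ℝ)..(1 / (n:ℝ)), (ArithmeticFunction.vonMangoldt n) * (x ^ (k + 1) - n * x ^ (k + 2)) := by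
    apply intervalIntegral.integral_congr
    intro x hx
    rw [Set.uIcc_of_le (by positivity)] at hx
    have h3 := hx.2
    rw [le_div_iff₀ hn0] at h3
    simp only [fV]
    rw [max_eq_left (by nlinarith [hx.1])]
    ring
  rw [h2, h1, add_zero, intervalIntegral.integral_const_mul, intervalIntegral.integral_sub
    (Continuous.intervalIntegrable (by fun_prop) _ _) (Continuous.intervalIntegrable (by fun_prop) _ _),
    intervalIntegral.integral_const_mul, integral_pow, integral_pow]
  push_cast
  rw [zero_pow (by omega), zero_pow (by omega), div_pow, div_pow, one_pow, one_pow]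
  have : (k:ℝ) + 1 + 1 ≠ 0 := by positivity
  have : (k:ℝ) + 2 + 1 ≠ 0 := by positivity
  have : (k:ℝ) + 2 ≠ 0 := by positivity
  have : (k:ℝ) + 3 ≠ 0 := by positivity
  rw [show (k:ℝ) + 1 + 1 = k + 2 by ring, show (k:ℝ) + 2 + 1 = k + 3 by ring, show k + 1 + 1 = k + 2 by ring, pow_succ (n:ℝ) (k+2)]
  field_simp
  ring

open MeasureTheory in
lemma Vf_moment (k : ℕ) : ∫ x in (0:ℝ)..1, Vf x * x ^ k =
    1 / ((k + 2) * (k + 3)) * ∑' n : ℕ, ArithmeticFunction.vonMangoldt n / (n : ℝ) ^ (k + 2) := by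
  have hs := (L_re k).2.mul_left (1 / (((k:ℝ) + 2) * (k + 3)))
  have h := hasSum_integral_of_summable_integral_norm (μ := volume.restrict (Set.Ioc (0:ℝ) 1))
    (F := fun n x => fV n x * x ^ k) (by
      intro n
      have hc : Continuous fun x : ℝ => fV n x * x ^ k := (fV_cont n).mul (by fun_prop)
      exact (hc.intervalIntegrable 0 1).1) (by
      refine hs.congr fun n => ?_
      rw [← fV_moment n k, intervalIntegral.integral_of_le zero_le_one]
      apply setIntegral_congr_fun measurableSet_Ioc
      intro x hx
      exact (Real.norm_of_nonneg (mul_nonneg (fV_nonneg n x) (pow_nonneg hx.1.le k))).symm)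
  have h2 := h.tsum_eq
  simp only [tsum_mul_right] at h2
  rw [intervalIntegral.integral_of_le zero_le_one, ← tsum_mul_left]
  change ∫ x in Set.Ioc (0:ℝ) 1, (∑' n : ℕ, fV n x) * x ^ k = _
  rw [← h2]
  congr 1
  ext n
  rw [← fV_moment n k, intervalIntegral.integral_of_le zero_le_one]

open MeasureTheory in
lemma Vf_integrable : IntervalIntegrable Vf volume 0 1 := by
  rw [intervalIntegrable_iff_integrableOn_Ioc_of_le zero_le_one]
  apply Integrable.of_integral_ne_zero
  have h := Vf_moment 0
  simp only [pow_zero, mul_one] at h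
  rw [intervalIntegral.integral_of_le zero_le_one] at h
  rw [h]
  apply ne_of_gt
  apply mul_pos (by norm_num)
  apply (L_re 0).2.tsum_pos (fun n => div_nonneg ArithmeticFunction.vonMangoldt_nonneg (by positivity)) 2
  have : 0 < Real.log 2 := Real.log_pos (by norm_num)
  rw [ArithmeticFunction.vonMangoldt_apply_prime Nat.prime_two]
  push_cast
  positivity

noncomputable def Uf (x : ℝ) : ℝ := Vf x - (1 - x) ^ 2 / 2 + c0 * (x - x ^ 2)

open MeasureTheory in
lemma Uf_integrable : IntervalIntegrable Uf volume 0 1 := by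
  unfold Uf
  exact (Vf_integrable.sub (Continuous.intervalIntegrable (by fun_prop) _ _)).add
    (Continuous.intervalIntegrable (by fun_prop) _ _)

lemma Uf_contAt (x : ℝ) (hx : 0 < x) : ContinuousAt Uf x := by
  unfold Uf
  have := Vf_contAt x hx
  fun_prop

lemma Uf_moment (k : ℕ) : ∫ x in (0:ℝ)..1, Uf x * x ^ k =
    1 / ((k + 2) * (k + 3)) *
      (c0 - 1 / (k + 1) + ∑' n : ℕ, ArithmeticFunction.vonMangoldt n / (n : ℝ) ^ (k + 2)) := by
  have e : ∀ x : ℝ, Uf x * x ^ k = Vf x * x ^ k + ((-1/2) * x ^ k + ((1 + c0) * x ^ (k + 1) + (-(1/2) - c0) * x ^ (k + 2))) := by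
    intro x; unfold Uf; ring
  simp only [e]
  rw [intervalIntegral.integral_add (Vf_integrable.mul_continuousOn (by fun_prop)) (Continuous.intervalIntegrable (by fun_prop) _ _),
    intervalIntegral.integral_add (Continuous.intervalIntegrable (by fun_prop) _ _) (Continuous.intervalIntegrable (by fun_prop) _ _),
    intervalIntegral.integral_add (Continuous.intervalIntegrable (by fun_prop) _ _) (Continuous.intervalIntegrable (by fun_prop) _ _),
    Vf_moment, intervalIntegral.integral_const_mul, intervalIntegral.integral_const_mul, intervalIntegral.integral_const_mul,
    integral_pow, integral_pow, integral_pow]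
  push_cast
  rw [zero_pow (by omega), zero_pow (by omega), zero_pow (by omega), one_pow, one_pow, one_pow]
  have : (k:ℝ) + 1 ≠ 0 := by positivity
  have : (k:ℝ) + 2 ≠ 0 := by positivity
  have : (k:ℝ) + 3 ≠ 0 := by positivity
  rw [show (k:ℝ) + 1 + 1 = k + 2 by ring, show (k:ℝ) + 2 + 1 = k + 3 by ring]
  field_simp
  ring

noncomputable def Wf (x : ℝ) : ℝ := 5 / 4 * (2 * x ^ (1 / 2 : ℝ) + 3 * x + x ^ 2)

lemma Wf_cont : Continuous Wf := by
  unfold Wf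
  have : Continuous fun x : ℝ => x ^ (1 / 2 : ℝ) := Real.continuous_rpow_const (by norm_num)
  fun_prop

lemma Wf_poly (P : Polynomial ℝ) : ∫ x in (0:ℝ)..1, Wf x * P.eval x = 5 / 4 * Iw P := by
  have hc : Continuous fun x : ℝ => x ^ (1 / 2 : ℝ) := Real.continuous_rpow_const (by norm_num)
  have hP : Continuous fun x : ℝ => P.eval x := P.continuous
  have e : ∀ x : ℝ, Wf x * P.eval x = 5 / 4 * (2 * (P.eval x * x ^ (1 / 2 : ℝ)) + 3 * (P.eval x * x ^ (1:ℝ)) + P.eval x * x ^ (2:ℝ)) := by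
    intro x
    unfold Wf
    rw [Real.rpow_one, Real.rpow_two]
    ring
  simp only [e]
  have h1 : Continuous fun x : ℝ => x ^ (1 : ℝ) := Real.continuous_rpow_const (by norm_num)
  have h2 : Continuous fun x : ℝ => x ^ (2 : ℝ) := Real.continuous_rpow_const (by norm_num)
  rw [intervalIntegral.integral_const_mul, intervalIntegral.integral_add (Continuous.intervalIntegrable (by fun_prop) _ _) (Continuous.intervalIntegrable (by fun_prop) _ _),
    intervalIntegral.integral_add (Continuous.intervalIntegrable (by fun_prop) _ _) (Continuous.intervalIntegrable (by fun_prop) _ _),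
    intervalIntegral.integral_const_mul, intervalIntegral.integral_const_mul, Iw]

lemma Uf_poly (P : Polynomial ℝ) : ∫ x in (0:ℝ)..1, Uf x * P.eval x =
    ∑ k ∈ Finset.range (P.natDegree + 1), P.coeff k / ((k + 2) * (k + 3)) *
      (c0 - 1 / (k + 1) + ∑' n : ℕ, ArithmeticFunction.vonMangoldt n / (n : ℝ) ^ (k + 2)) := by
  have e : ∀ x : ℝ, Uf x * P.eval x = ∑ k ∈ Finset.range (P.natDegree + 1), P.coeff k * (Uf x * x ^ k) := by
    intro x
    rw [Polynomial.eval_eq_sum_range, Finset.mul_sum]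
    apply Finset.sum_congr rfl
    intro k _
    ring
  simp only [e]
  rw [intervalIntegral.integral_finset_sum]
  · apply Finset.sum_congr rfl
    intro k _
    rw [intervalIntegral.integral_const_mul, Uf_moment]
    ring
  · intro k _
    exact (Uf_integrable.mul_continuousOn (by fun_prop)).const_mul _

lemma UW_poly (hRH : RH) (P : Polynomial ℝ) (hP : ∀ x ∈ Set.Icc (0:ℝ) 1, 0 ≤ P.eval x) :
    |∫ x in (0:ℝ)..1, Uf x * P.eval x| ≤ ∫ x in (0:ℝ)..1, Wf x * P.eval x := by
  rw [Uf_poly, Wf_poly]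
  exact main_moment hRH P hP

/-- Localisation: if `∫ h P ≥ 0` for all polynomials nonnegative on `[0,1]`, then `h ≥ 0` where continuous. -/
lemma localise (h : ℝ → ℝ) (hi : IntervalIntegrable h MeasureTheory.volume 0 1)
    (hp : ∀ P : Polynomial ℝ, (∀ x ∈ Set.Icc (0:ℝ) 1, 0 ≤ P.eval x) → 0 ≤ ∫ x in (0:ℝ)..1, h x * P.eval x)
    (x0 : ℝ) (h0 : 0 < x0) (h1 : x0 < 1) (hc : ContinuousAt h x0) : 0 ≤ h x0 := by
  -- extend to continuous functions
  have hcont : ∀ φ : ℝ → ℝ, Continuous φ → (∀ x, 0 ≤ φ x) → 0 ≤ ∫ x in (0:ℝ)..1, h x * φ x := by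
    intro φ hφ hφ0
    set M := ∫ x in (0:ℝ)..1, |h x| with hM
    have hM0 : 0 ≤ M := intervalIntegral.integral_nonneg zero_le_one fun x _ => abs_nonneg _
    have key : ∀ ε > 0, -(2 * ε * M) ≤ ∫ x in (0:ℝ)..1, h x * φ x := by
      intro ε hε
      obtain ⟨p, hpε⟩ := exists_polynomial_near_of_continuousOn 0 1 φ hφ.continuousOn ε hε
      have h3 := hp (p + Polynomial.C ε) (by
        intro x hx
        have := abs_lt.mp (hpε x hx)
        simp only [Polynomial.eval_add, Polynomial.eval_C]
        linarith [hφ0 x])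
      have h4 : (∫ x in (0:ℝ)..1, h x * (p + Polynomial.C ε).eval x) - ∫ x in (0:ℝ)..1, h x * φ x ≤ ∫ x in (0:ℝ)..1, 2 * ε * |h x| := by
        have hq : Continuous fun x : ℝ => (p + Polynomial.C ε).eval x := Polynomial.continuous _
        have i1 : IntervalIntegrable (fun x => h x * (p + Polynomial.C ε).eval x) MeasureTheory.volume 0 1 := hi.mul_continuousOn hq.continuousOn
        have i2 : IntervalIntegrable (fun x => h x * φ x) MeasureTheory.volume 0 1 := hi.mul_continuousOn hφ.continuousOn
        rw [← intervalIntegral.integral_sub i1 i2]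
        apply intervalIntegral.integral_mono_on zero_le_one (i1.sub i2) (hi.abs.const_mul _)
        intro x hx
        have := abs_lt.mp (hpε x hx)
        simp only [Polynomial.eval_add, Polynomial.eval_C]
        rw [← mul_sub]
        calc h x * (Polynomial.eval x p + ε - φ x) ≤ |h x * (Polynomial.eval x p + ε - φ x)| := le_abs_self _
          _ = |h x| * |Polynomial.eval x p + ε - φ x| := abs_mul _ _
          _ ≤ |h x| * (2 * ε) := by
            apply mul_le_mul_of_nonneg_left _ (abs_nonneg _)
            rw [abs_le]; constructor <;> linarith
          _ = _ := by ring
      rw [intervalIntegral.integral_const_mul] at h4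
      linarith
    by_contra hneg
    push Not at hneg
    set I := ∫ x in (0:ℝ)..1, h x * φ x with hI
    have h5 := key (-I / (4 * (M + 1))) (by apply div_pos <;> linarith)
    have h6 : 2 * (-I / (4 * (M + 1))) * M = -I / 2 * (M / (M + 1)) := by field_simp; ring
    have h7 : M / (M + 1) ≤ 1 := by rw [div_le_one (by linarith)]; linarith
    rw [h6] at h5
    nlinarith
  by_contra hneg
  push Not at hneg
  have hev : ∀ᶠ x in nhds x0, h x < 0 := hc.eventually (Iio_mem_nhds hneg)
  obtain ⟨d, hd, hball⟩ := Metric.eventually_nhds_iff.mp hev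
  set e := min d (min x0 (1 - x0)) with he
  have he0 : 0 < e := lt_min hd (lt_min h0 (by linarith))
  have hed : e ≤ d := min_le_left _ _
  have hex : e ≤ x0 := (min_le_right _ _).trans (min_le_left _ _)
  have hex1 : e ≤ 1 - x0 := (min_le_right _ _).trans (min_le_right _ _)
  set φ : ℝ → ℝ := fun x => max (e - |x - x0|) 0 with hφ
  have hφc : Continuous φ := by fun_prop
  have h8 := hcont φ hφc fun x => le_max_right _ _
  have hle : ∀ x, h x * φ x ≤ 0 := by
    intro x
    by_cases hx : |x - x0| < e
    · exact mul_nonpos_of_nonpos_of_nonneg (hball (by rw [Real.dist_eq]; linarith)).le (le_max_right _ _)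
    · simp only [hφ]
      rw [max_eq_right (by linarith), mul_zero]
  have i2 : IntervalIntegrable (fun x => h x * φ x) MeasureTheory.volume 0 1 := hi.mul_continuousOn hφc.continuousOn
  have h9 : 0 < ∫ x in (0:ℝ)..1, -(h x * φ x) := by
    have i3 : ∀ a b : ℝ, 0 ≤ a → a ≤ b → b ≤ 1 → IntervalIntegrable (fun x => -(h x * φ x)) MeasureTheory.volume a b := by
      intro a b ha hab hb
      apply i2.neg.mono_set
      rw [Set.uIcc_of_le hab, Set.uIcc_of_le zero_le_one]
      exact Set.Icc_subset_Icc ha hb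
    have i01 := i3 0 (x0 - e / 2) le_rfl (by linarith) (by linarith)
    have i02 := i3 (x0 - e / 2) (x0 + e / 2) (by linarith) (by linarith) (by linarith)
    have i03 := i3 (x0 + e / 2) 1 (by linarith) (by linarith) (by linarith)
    rw [← intervalIntegral.integral_add_adjacent_intervals (i01.trans i02) i03,
      ← intervalIntegral.integral_add_adjacent_intervals i01 i02]
    have n1 : 0 ≤ ∫ x in (0:ℝ)..(x0 - e / 2), -(h x * φ x) :=
      intervalIntegral.integral_nonneg (by linarith) fun x _ => by linarith [hle x]
    have n3 : 0 ≤ ∫ x in (x0 + e / 2)..1, -(h x * φ x) :=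
      intervalIntegral.integral_nonneg (by linarith) fun x _ => by linarith [hle x]
    have n2 : 0 < ∫ x in (x0 - e / 2)..(x0 + e / 2), -(h x * φ x) := by
      apply intervalIntegral.intervalIntegral_pos_of_pos_on i02 _ (by linarith)
      intro x hx
      have hx' : |x - x0| < e := by rw [abs_lt]; constructor <;> linarith [hx.1, hx.2]
      have p1 : h x < 0 := hball (by rw [Real.dist_eq]; linarith)
      have p2 : 0 < φ x := lt_max_of_lt_left (by linarith)
      nlinarith [mul_pos (neg_pos.mpr p1) p2]
    linarith
  rw [intervalIntegral.integral_neg] at h9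
  linarith

lemma Uf_bound (hRH : RH) (x : ℝ) (h0 : 0 < x) (h1 : x < 1) : |Uf x| ≤ Wf x := by
  have hW := Wf_cont.intervalIntegrable (μ := MeasureTheory.volume) 0 1
  have a1 : ∀ P : Polynomial ℝ, IntervalIntegrable (fun x => Uf x * P.eval x) MeasureTheory.volume 0 1 :=
    fun P => Uf_integrable.mul_continuousOn P.continuous.continuousOn
  have a2 : ∀ P : Polynomial ℝ, IntervalIntegrable (fun x => Wf x * P.eval x) MeasureTheory.volume 0 1 :=
    fun P => hW.mul_continuousOn P.continuous.continuousOn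
  rw [abs_le]
  constructor
  · have := localise (fun x => Wf x + Uf x) (hW.add Uf_integrable) (by
      intro P hP
      have := UW_poly hRH P hP
      simp only [add_mul]
      rw [intervalIntegral.integral_add (a2 P) (a1 P)]
      linarith [abs_le.mp this]) x h0 h1 (Wf_cont.continuousAt.add (Uf_contAt x h0))
    linarith
  · have := localise (fun x => Wf x - Uf x) (hW.sub Uf_integrable) (by
      intro P hP
      have := UW_poly hRH P hP
      simp only [sub_mul]
      rw [intervalIntegral.integral_sub (a2 P) (a1 P)]
      linarith [abs_le.mp this]) x h0 h1 (Wf_cont.continuousAt.sub (Uf_contAt x h0))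
    linarith


lemma log_eta (j : ℕ) : Real.log (eta j) = ArithmeticFunction.vonMangoldt j := by
  rw [eta, ArithmeticFunction.vonMangoldt_apply]
  split_ifs <;> simp

lemma eta_pos (j : ℕ) : 0 < eta j := by
  rw [eta]
  split_ifs
  · exact Nat.minFac_pos j
  · exact one_pos

lemma delta_pos (n : ℕ) : 0 < delta n :=
  Finset.prod_pos fun _ _ => Finset.prod_pos fun j _ => eta_pos j

lemma log_delta (n : ℕ) : Real.log (delta n) =
    ∑ m ∈ Finset.range n, ∑ j ∈ Finset.Icc 1 m, ArithmeticFunction.vonMangoldt j := by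
  unfold delta
  push_cast
  rw [Real.log_prod (fun m _ => Finset.prod_ne_zero_iff.mpr fun j _ => by
    exact_mod_cast (eta_pos j).ne')]
  apply Finset.sum_congr rfl
  intro m _
  rw [Real.log_prod (fun j _ => by exact_mod_cast (eta_pos j).ne')]
  exact Finset.sum_congr rfl fun j _ => log_eta j

lemma psi_sum (n : ℕ) : ∑ m ∈ Finset.range n, ∑ j ∈ Finset.Icc 1 m, ArithmeticFunction.vonMangoldt j =
    ∑ j ∈ Finset.range n, ArithmeticFunction.vonMangoldt j * ((n:ℝ) - j) := by
  induction n with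
  | zero => simp
  | succ n ih =>
    rw [Finset.sum_range_succ, ih, Finset.sum_range_succ]
    have : ∑ j ∈ Finset.Icc 1 n, ArithmeticFunction.vonMangoldt j = ∑ j ∈ Finset.range (n + 1), ArithmeticFunction.vonMangoldt j := by
      rw [Finset.range_eq_Ico, Finset.sum_eq_sum_Ico_succ_bot (by omega)]
      simp
      rfl
    rw [this, Finset.sum_range_succ, ← add_assoc, ← Finset.sum_add_distrib]
    push_cast
    congr 1
    · apply Finset.sum_congr rfl
      intro j _
      ring
    · ring

lemma Vf_inv (n : ℕ) (hn : 0 < n) : (n:ℝ) ^ 2 * Vf (1 / n) = Real.log (delta n) := by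
  have hn0 : (0:ℝ) < n := by exact_mod_cast hn
  rw [log_delta, psi_sum, Vf_eq_sum (1 / n) (by positivity) n (by field_simp; exact le_rfl) _ le_rfl, Finset.mul_sum]
  apply Finset.sum_congr rfl
  intro j hj
  have : (j:ℝ) ≤ n := by exact_mod_cast (Finset.mem_range.mp hj).le
  unfold fV
  rw [max_eq_left]
  · field_simp
  · have : (1:ℝ) / n - j * (1 / n) ^ 2 = (n - j) / n ^ 2 := by field_simp
    rw [this]
    apply div_nonneg <;> [linarith; positivity]

lemma psi_bound (hRH : RH) (n : ℕ) (hn : 2 ≤ n) :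
    |Real.log (delta n) - ((n:ℝ) - 1) ^ 2 / 2 + c0 * (n - 1)| ≤
      5 / 4 * (2 * (n:ℝ) ^ ((3:ℝ) / 2) + 3 * n + 1) := by
  have hn2 : (2:ℝ) ≤ n := by exact_mod_cast hn
  have hn0 : (0:ℝ) < n := by linarith
  have h := Uf_bound hRH (1 / n) (by positivity) (by rw [div_lt_one hn0]; linarith)
  have e1 : (n:ℝ) ^ 2 * Uf (1 / n) = Real.log (delta n) - ((n:ℝ) - 1) ^ 2 / 2 + c0 * (n - 1) := by
    rw [← Vf_inv n (by omega)]
    unfold Uf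
    field_simp
  have e2 : (n:ℝ) ^ 2 * Wf (1 / n) = 5 / 4 * (2 * (n:ℝ) ^ ((3:ℝ) / 2) + 3 * n + 1) := by
    unfold Wf
    have : (n:ℝ) ^ ((3:ℝ) / 2) = n ^ 2 * (1 / (n:ℝ)) ^ (1 / 2 : ℝ) := by
      rw [one_div (n:ℝ), Real.inv_rpow hn0.le, ← Real.rpow_neg hn0.le, ← Real.rpow_natCast, ← Real.rpow_add hn0]
      norm_num
    rw [this]
    field_simp
  rw [← e1, ← e2, abs_mul, abs_of_pos (by positivity)]
  exact mul_le_mul_of_nonneg_left h (by positivity)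

lemma harm_bounds (N : ℕ) (hN : 0 < N) : Real.log N ≤ ∑ k ∈ Finset.Icc 1 N, (1 : ℝ) / k ∧
    ∑ k ∈ Finset.Icc 1 N, (1 : ℝ) / k ≤ 1 + Real.log N := by
  have e : ∑ k ∈ Finset.Icc 1 N, (1 : ℝ) / k = (harmonic N : ℝ) := by
    rw [harmonic_eq_sum_Icc]
    push_cast
    simp
  rw [e]
  refine ⟨le_trans (Real.log_le_log (by exact_mod_cast hN) (by push_cast; linarith)) (log_add_one_le_harmonic N), harmonic_le_one_add_log N⟩

theorem rh_implies_harmonic_bound' (hRH : RH) :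
    ∀ n : ℕ, 0 < n →
      ((∑ k ∈ Finset.Icc 1 (delta n), (1 : ℝ) / k) - (n : ℝ) ^ 2 / 2) ^ 2
        < 25 * (n : ℝ) ^ 3 + 10 * (n : ℝ) ^ ((3 : ℝ) / 2) + 1 := by
  intro n hn
  have hn1 : (1:ℝ) ≤ n := by exact_mod_cast hn
  have hn0 : (0:ℝ) ≤ n := by linarith
  set r := Real.sqrt n with hr
  have hr2 : r ^ 2 = n := Real.sq_sqrt hn0
  have hr1 : 1 ≤ r := by rw [hr]; exact Real.one_le_sqrt.mpr hn1
  have hpow : (n:ℝ) ^ ((3:ℝ) / 2) = r ^ 3 := by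
    rw [hr, Real.sqrt_eq_rpow, ← Real.rpow_natCast, ← Real.rpow_mul hn0]
    norm_num
  obtain ⟨b1, b2⟩ := harm_bounds (delta n) (delta_pos n)
  set H := ∑ k ∈ Finset.Icc 1 (delta n), (1 : ℝ) / k with hH
  have hlog0 : 0 ≤ Real.log (delta n) := Real.log_natCast_nonneg _
  have key : |H - (n:ℝ) ^ 2 / 2| < 5 * r ^ 3 + 1 := by
    rcases Nat.lt_or_ge n 2 with h2 | h2
    · have h1 : n = 1 := by omega
      subst h1
      have : delta 1 = 1 := by simp [delta]
      rw [this] at b1 b2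
      simp at b1 b2
      rw [abs_lt]
      push_cast
      constructor <;> nlinarith [pow_pos (show 0 < r by linarith) 3, one_le_pow₀ hr1 (n := 3)]
    · have hb := abs_le.mp (psi_bound hRH n h2)
      rw [hpow] at hb
      obtain ⟨c1, c2⟩ := c0_bounds
      have hn2 : (2:ℝ) ≤ n := by exact_mod_cast h2
      have hr14 : (1.414:ℝ) ≤ r := by
        rw [hr]; apply Real.le_sqrt_of_sq_le; norm_num; linarith
      have hc : 0.75 * ((n:ℝ) - 1) ≤ c0 * (n - 1) := mul_le_mul_of_nonneg_right c1.le (by linarith)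
      have hc' : c0 * ((n:ℝ) - 1) ≤ 1 * (n - 1) := mul_le_mul_of_nonneg_right c2.le (by linarith)
      rw [← hr2] at *
      rw [abs_lt]
      constructor
      · by_cases h100 : r ≤ 10
        · have : r ^ 4 ≤ 10 * r ^ 3 := by
            have : 0 ≤ r ^ 3 := by positivity
            nlinarith
          nlinarith
        · push Not at h100
          have : 10 * r ^ 2 ≤ r ^ 3 := by nlinarith [sq_nonneg r]
          nlinarith
      · have : 1.414 * r ^ 2 ≤ r ^ 3 := by nlinarith [sq_nonneg r]
        nlinarith
  have h3 : 25 * (n : ℝ) ^ 3 + 10 * (n : ℝ) ^ ((3 : ℝ) / 2) + 1 = (5 * r ^ 3 + 1) ^ 2 := by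
    rw [hpow, ← hr2]; ring
  rw [h3]
  rw [abs_lt] at key
  apply sq_lt_sq'
  · linarith
  · linarith
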